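/- arXiv:2507.18698 — 5 statements merged into one kernel-verified Lean document; each statement's English description precedes it below -/
import Mathlib

section
/- Let m ≥ 0 and let ϑ(θ) = (1 − sin θ)/cos θ for θ ∈ (−π/2, π/2). Let λΩ, λD : (−π/2, π/2) → ℝ and μΩ, μD : (0, ∞) → ℝ be functions, let θ ∈ (−π/2, π/2), a > 0, and θ* ∈ (−π/2, π/2), and assume: (1) λΩ is strictly decreasing on (−π/2, π/2); (2) μD is strictly increasing on (0, ∞); (3) λD(θ) > m; (4) μΩ(a) = λD(θ)² − m²; (5) μD((λD(θ) + m)·ϑ(θ)) = λD(θ)² − m²; (6) ϑ(θ*) = a/(√(μΩ(a) + m²) + m) and λΩ(θ*) = √(μΩ(a) + m²). If μΩ(a) > μD(a), then λΩ(θ) > λD(θ). -/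
open Real Set

/-- The function ϑ(θ) = (1 − sin θ)/cos θ. -/
noncomputable def vartheta (θ : ℝ) : ℝ := (1 - Real.sin θ) / Real.cos θ

/-!
In the variable `x = π / 2 - θ` the half-angle formula reads `vartheta θ = tan (π / 4 - θ / 2)`, so
`vartheta` is positive and strictly decreasing on `(-π/2, π/2)`. Put `L = λD(θ) = √(μΩ(a) + m²)`.
Since `μD(a) < μΩ(a) = μD((L + m) ϑ(θ))`, monotonicity of `μD` gives `a < (L + m) ϑ(θ)`, that is
`ϑ(θ*) < ϑ(θ)`. Hence `θ < θ*`, and `λΩ(θ) > λΩ(θ*) = L`.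
-/

/-- Where `sin x = 0` both sides are zero, since division by zero is zero. -/
theorem tan_half_eq_one_sub_cos_div_sin (x : ℝ) : tan (x / 2) = (1 - cos x) / sin x := by
  have sin_double : sin x = 2 * sin (x / 2) * cos (x / 2) := by
    rw [← sin_two_mul, mul_div_cancel₀ x two_ne_zero]
  have one_sub_cos : 1 - cos x = 2 * sin (x / 2) * sin (x / 2) := by
    have cos_double : cos x = cos (2 * (x / 2)) := by rw [mul_div_cancel₀ x two_ne_zero]
    rw [cos_double, cos_two_mul, cos_sq']
    ring
  rcases eq_or_ne (sin (x / 2)) 0 with hsin | hsin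
  · simp [tan_eq_sin_div_cos, one_sub_cos, hsin]
  · rw [tan_eq_sin_div_cos, sin_double, one_sub_cos,
      mul_div_mul_left _ _ (mul_ne_zero two_ne_zero hsin)]

theorem vartheta_eq_tan (θ : ℝ) : vartheta θ = tan (π / 4 - θ / 2) := by
  have half_complement : π / 4 - θ / 2 = (π / 2 - θ) / 2 := by ring
  rw [half_complement, tan_half_eq_one_sub_cos_div_sin, cos_pi_div_two_sub, sin_pi_div_two_sub,
    vartheta]

theorem vartheta_pos {θ : ℝ} (hθ : θ ∈ Ioo (-(π / 2)) (π / 2)) : 0 < vartheta θ := by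
  rw [vartheta_eq_tan]
  exact tan_pos_of_pos_of_lt_pi_div_two (by linarith [hθ.2]) (by linarith [hθ.1])

theorem strictAntiOn_vartheta : StrictAntiOn vartheta (Ioo (-(π / 2)) (π / 2)) := by
  intro x hx y hy hxy
  rw [vartheta_eq_tan, vartheta_eq_tan]
  exact tan_lt_tan_of_lt_of_lt_pi_div_two (by linarith [hy.2, pi_pos]) (by linarith [hx.1])
    (by linarith)

theorem lt_of_vartheta_eq_div {θ θs a c : ℝ} (hθ : θ ∈ Ioo (-(π / 2)) (π / 2))
    (hθs : θs ∈ Ioo (-(π / 2)) (π / 2)) (hc : 0 < c) (hvartheta : vartheta θs = a / c)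
    (ha : a < c * vartheta θ) : θ < θs := by
  refine (strictAntiOn_vartheta.lt_iff_gt hθs hθ).1 ?_
  rwa [hvartheta, div_lt_iff₀' hc]

/-- Abstract form of Theorem 2.1(i). -/
theorem stmt_0 (m : ℝ) (hm : 0 ≤ m)
    (lamΩ lamD μΩ μD : ℝ → ℝ)
    (θ a θs : ℝ)
    (hθ : θ ∈ Ioo (-(π/2)) (π/2)) (ha : 0 < a) (hθs : θs ∈ Ioo (-(π/2)) (π/2))
    (h1 : StrictAntiOn lamΩ (Ioo (-(π/2)) (π/2)))
    (h2 : StrictMonoOn μD (Ioi 0))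
    (h3 : lamD θ > m)
    (h4 : μΩ a = (lamD θ)^2 - m^2)
    (h5 : μD ((lamD θ + m) * vartheta θ) = (lamD θ)^2 - m^2)
    (h6a : vartheta θs = a / (Real.sqrt (μΩ a + m^2) + m))
    (h6b : lamΩ θs = Real.sqrt (μΩ a + m^2))
    (h7 : μΩ a > μD a) :
    lamΩ θ > lamD θ := by
  have hpos : 0 < lamD θ := hm.trans_lt h3
  have hsum : 0 < lamD θ + m := add_pos_of_pos_of_nonneg hpos hm
  have hsqrt : √(μΩ a + m ^ 2) = lamD θ := by rw [h4, sub_add_cancel, sqrt_sq hpos.le]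
  rw [hsqrt] at h6a h6b
  have μD_lt : μD a < μD ((lamD θ + m) * vartheta θ) := by rwa [h5, ← h4]
  have a_lt : a < (lamD θ + m) * vartheta θ :=
    (h2.lt_iff_lt ha (mul_pos hsum (vartheta_pos hθ))).1 μD_lt
  have θ_lt : θ < θs := lt_of_vartheta_eq_div hθ hθs hsum h6a a_lt
  calc
    lamD θ = lamΩ θs := h6b.symm
    _ < lamΩ θ := h1 hθ hθs θ_lt
end

section
/- Let m ≥ 0 and let ϑ(θ) = (1 − sin θ)/cos θ for θ ∈ (−π/2, π/2). Let λΩ, λD : (−π/2, π/2) → ℝ and μΩ, μD : (0, ∞) → ℝ be functions, let θ ∈ (−π/2, π/2), a > 0, and θ* ∈ (−π/2, π/2), and assume: (1) λD is strictly decreasing on (−π/2, π/2); (2) μΩ is strictly increasing on (0, ∞); (3) μD(a) > 0; (4) λΩ(θ) = √(μD(a) + m²); (5) ϑ(θ*) = a/(√(μD(a) + m²) + m) and λD(θ*) = √(μD(a) + m²); (6) μΩ((λΩ(θ) + m)·ϑ(θ)) = λΩ(θ)² − m². If λΩ(θ) > λD(θ), then μΩ(a) > μD(a). -/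
open Real Set

/-!
Since `ϑ θ = tan (π / 4 - θ / 2)`, the function `ϑ` is positive and strictly decreasing on
`(-π/2, π/2)`. If `λΩ(θ) = λD(θ*)` exceeds `λD(θ)`, then `θ* < θ` because `λD` is decreasing, so
`(λ + m) ϑ(θ) < (λ + m) ϑ(θ*) = a` for this common value `λ`. Monotonicity of `μΩ` then gives
`μD(a) = λ² - m² = μΩ((λ + m) ϑ(θ)) < μΩ(a)`.
-/

-- Where a denominator vanishes, both sides are `0` by the convention `x / 0 = 0`.
theorem tan_eq_one_sub_cos_two_mul_div_sin_two_mul (x : ℝ) :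
    tan x = (1 - cos (2 * x)) / sin (2 * x) := by
  have h_num : 1 - cos (2 * x) = 2 * sin x * sin x := by
    rw [cos_two_mul, cos_sq']
    ring
  rw [h_num, sin_two_mul, tan_eq_sin_div_cos]
  rcases eq_or_ne (sin x) 0 with h_sin | h_sin
  · simp [h_sin]
  · rw [mul_div_mul_left _ _ (mul_ne_zero two_ne_zero h_sin)]

theorem stmt_1_general {m : ℝ} {lamΩ lamD μΩ μD : ℝ → ℝ} {θ a θs : ℝ}
    (hθ : θ ∈ Ioo (-(π / 2)) (π / 2)) (ha : 0 < a) (hθs : θs ∈ Ioo (-(π / 2)) (π / 2))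
    (h_anti : AntitoneOn lamD (Ioo (-(π / 2)) (π / 2))) (h_mono : StrictMonoOn μΩ (Ioi 0))
    (h_lam : lamΩ θ = lamD θs)
    (hD_param : (lamD θs + m) * vartheta θs = a) (hD : μD a = lamD θs ^ 2 - m ^ 2)
    (hΩ : μΩ ((lamΩ θ + m) * vartheta θ) = lamΩ θ ^ 2 - m ^ 2)
    (h_lt : lamD θ < lamΩ θ) :
    μD a < μΩ a := by
  rw [h_lam] at hΩ h_lt
  have h_angle : θs < θ := h_anti.reflect_lt hθ hθs h_lt
  have h_coeff : 0 < lamD θs + m :=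
    pos_of_mul_pos_left (hD_param ▸ ha) (vartheta_pos hθs).le
  have h_param : (lamD θs + m) * vartheta θ < a :=
    hD_param ▸ mul_lt_mul_of_pos_left (strictAntiOn_vartheta hθs hθ h_angle) h_coeff
  calc μD a = μΩ ((lamD θs + m) * vartheta θ) := hD.trans hΩ.symm
    _ < μΩ a := h_mono (mul_pos h_coeff (vartheta_pos hθ)) ha h_param

/-- Abstract form of Theorem 2.1(ii). -/
theorem stmt_1 (m : ℝ) (hm : 0 ≤ m)
    (lamΩ lamD μΩ μD : ℝ → ℝ)
    (θ a θs : ℝ)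
    (hθ : θ ∈ Ioo (-(π/2)) (π/2)) (ha : 0 < a) (hθs : θs ∈ Ioo (-(π/2)) (π/2))
    (h1 : StrictAntiOn lamD (Ioo (-(π/2)) (π/2)))
    (h2 : StrictMonoOn μΩ (Ioi 0))
    (h3 : μD a > 0)
    (h4 : lamΩ θ = Real.sqrt (μD a + m^2))
    (h5a : vartheta θs = a / (Real.sqrt (μD a + m^2) + m))
    (h5b : lamD θs = Real.sqrt (μD a + m^2))
    (h6 : μΩ ((lamΩ θ + m) * vartheta θ) = (lamΩ θ)^2 - m^2)
    (h7 : lamΩ θ > lamD θ) :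
    μΩ a > μD a :=
  stmt_1_general hθ ha hθs h1.antitoneOn h2 (h4.trans h5b.symm)
    (by rw [h5a, h5b, mul_div_cancel₀ _ (by positivity)])
    (by rw [h5b, sq_sqrt (by positivity), add_sub_cancel_right]) h6 h7
end

section
/- Let F : ℂ → ℂ be complex-differentiable on an open set containing the closed unit disk and injective on the closed unit disk, and set Ω := F(𝔻), where 𝔻 is the open unit disk. Let u : ℂ → ℂ be complex-differentiable on Ω and continuous on F(closed unit disk). Then ∫_𝔻 |u(F(z))|² |F'(z)|² dA(z) ≤ (1/2) · √(( ∫_𝔻 |F'(z)|² dA(z) ) / π) · ∫₀^{2π} |u(F(e^{iφ}))|² |F'(e^{iφ})| dφ, where dA denotes planar Lebesgue measure on 𝔻 and F' denotes the complex derivative of F. -/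
open Real Set MeasureTheory

/-!
Put `v = u ∘ F` and `w = F'`. By Cauchy–Schwarz, `∫ |v|²|w|² ≤ (∫ (|v|²|w|)²)^(1/2) |Ω|^(1/2)`, so
it suffices to show `∫ (|v|²|w|)² ≤ (4π)⁻¹ (∫ |v|²|w| dφ)²`. Replacing each factor `z - ζ` of `w`
coming from a zero `ζ` in the closed disc by `1 - conj ζ * z` leaves `|w|` unchanged on the circle
and does not decrease it inside, so one may assume that `w` has no zeros in the open disc and write
`w = q²`. For `f = v q` the claim is Carleman's inequality `∫ |f|⁴ ≤ (4π)⁻¹ (∫ |f|² dφ)²`: by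
Parseval, if `f = ∑ aₙ zⁿ` and `f² = ∑ cₙ zⁿ`, the two integrals are `π ∑ |cₙ|² / (n + 1)` and
`2π ∑ |aₙ|²`, and `cₙ` is a sum of `n + 1` products `aᵢ aⱼ`, so Cauchy–Schwarz gives
`|cₙ|² / (n + 1) ≤ ∑_{i + j = n} |aᵢ|² |aⱼ|²`.
-/

open Metric Filter Topology ComplexConjugate Finset.HasAntidiagonal

section Parseval

lemma sum_range_sq_norm_mul_pow_eq_circleAverage (a : ℕ → ℂ) (r : ℝ) (N : ℕ) :
    ∑ n ∈ Finset.range N, ‖a n‖ ^ 2 * r ^ (2 * n) =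
      circleAverage (fun z ↦ ‖∑ n ∈ Finset.range N, a n * z ^ n‖ ^ 2) 0 r := by
  let p : Polynomial ℂ := ∑ n ∈ Finset.range N, Polynomial.monomial n (a n * r ^ n)
  have coeff_p (i : ℕ) : p.coeff i = if i < N then a i * r ^ i else 0 := by
    simp [p, Polynomial.finsetSum_coeff, Polynomial.coeff_monomial]
  have eval_p (z : ℂ) : p.eval z = ∑ n ∈ Finset.range N, a n * (r * z) ^ n := by
    simp [p, Polynomial.eval_finsetSum, mul_pow, mul_assoc]
  have support_p : p.support ⊆ Finset.range N := fun i hi ↦ by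
    by_contra h
    simp_all
  rw [circleAverage_eq_circleAverage_zero_one]
  simp only [add_zero, ← eval_p]
  rw [← p.sum_sq_norm_coeff_eq_circleAverage,
    Finset.sum_subset support_p fun i _ hi ↦ by simp [Polynomial.notMem_support_iff.1 hi]]
  refine Finset.sum_congr rfl fun i hi ↦ ?_
  simp [coeff_p, Finset.mem_range.1 hi, mul_pow, pow_mul, pow_right_comm _ i 2, sq_abs]

lemma hasSum_sq_norm_mul_pow_circleAverage {f : ℂ → ℂ} {a : ℕ → ℂ} {r : ℝ}
    (ha : Summable fun n ↦ ‖a n‖ * |r| ^ n)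
    (hf : ∀ z ∈ sphere (0 : ℂ) |r|, HasSum (fun n ↦ a n * z ^ n) (f z)) :
    HasSum (fun n ↦ ‖a n‖ ^ 2 * r ^ (2 * n)) (circleAverage (fun z ↦ ‖f z‖ ^ 2) 0 r) := by
  have hterm (θ : ℝ) (n : ℕ) : ‖a n * circleMap 0 r θ ^ n‖ = ‖a n‖ * |r| ^ n := by simp
  refine (hasSum_iff_tendsto_nat_of_nonneg
    (fun n ↦ mul_nonneg (sq_nonneg _) ((even_two_mul n).pow_nonneg r)) _).2 ?_
  simp only [sum_range_sq_norm_mul_pow_eq_circleAverage, circleAverage]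
  refine Tendsto.const_smul (intervalIntegral.tendsto_integral_filter_of_dominated_convergence
    (fun _ ↦ (∑' n, ‖a n‖ * |r| ^ n) ^ 2) ?_ ?_ intervalIntegrable_const ?_) _
  · exact .of_forall fun N ↦ Continuous.aestronglyMeasurable (by fun_prop)
  · refine .of_forall fun N ↦ .of_forall fun θ _ ↦ ?_
    rw [norm_pow, norm_norm]
    gcongr
    calc ‖∑ n ∈ Finset.range N, a n * circleMap 0 r θ ^ n‖
        ≤ ∑ n ∈ Finset.range N, ‖a n‖ * |r| ^ n :=
          norm_sum_le_of_le _ fun n _ ↦ (hterm θ n).le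
      _ ≤ ∑' n, ‖a n‖ * |r| ^ n := ha.sum_le_tsum _ fun _ _ ↦ by positivity
  · refine .of_forall fun θ _ ↦ ?_
    exact ((hf _ (circleMap_mem_sphere' 0 r θ)).tendsto_sum_nat.norm).pow 2

end Parseval

/-- `f` has the Taylor expansion `∑ n, a n * z ^ n` on the open unit disc. Working with the
coefficients as a sequence lets the Hardy and Bergman norms of `f` be read off as weighted
`ℓ²` norms of `a`. -/
def HasDiscExpansion (f : ℂ → ℂ) (a : ℕ → ℂ) : Prop :=
  ∀ z ∈ ball (0 : ℂ) 1, HasSum (fun n ↦ a n * z ^ n) (f z)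

lemma exists_hasDiscExpansion {f : ℂ → ℂ} (hf : DifferentiableOn ℂ f (ball 0 1)) :
    ∃ a, HasDiscExpansion f a := by
  refine ⟨fun n ↦ (n.factorial : ℂ)⁻¹ * iteratedDeriv n f 0, fun z hz ↦ ?_⟩
  simpa [mul_left_comm, mul_comm] using Complex.hasSum_taylorSeries_on_ball hf hz

namespace HasDiscExpansion

variable {f g : ℂ → ℂ} {a b : ℕ → ℂ}

lemma mul (hf : HasDiscExpansion f a) (hg : HasDiscExpansion g b) :
    HasDiscExpansion (f * g) fun n ↦ ∑ p ∈ antidiagonal n, a p.1 * b p.2 := by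
  intro z hz
  have hfz := summable_norm_iff.2 (hf z hz).summable
  have hgz := summable_norm_iff.2 (hg z hz).summable
  have hterm (n : ℕ) : (∑ p ∈ antidiagonal n, a p.1 * b p.2) * z ^ n =
      ∑ p ∈ antidiagonal n, a p.1 * z ^ p.1 * (b p.2 * z ^ p.2) := by
    rw [Finset.sum_mul]
    refine Finset.sum_congr rfl fun p hp ↦ ?_
    rw [← mem_antidiagonal.1 hp, pow_add, mul_mul_mul_comm]
  simp only [hterm]
  rw [Pi.mul_apply, ← (hf z hz).tsum_eq, ← (hg z hz).tsum_eq,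
    tsum_mul_tsum_eq_tsum_sum_antidiagonal_of_summable_norm hfz hgz]
  exact (summable_norm_sum_mul_antidiagonal_of_summable_norm hfz hgz).of_norm.hasSum

lemma hasSum_circleAverage (hf : HasDiscExpansion f a) {r : ℝ} (hr : |r| < 1) :
    HasSum (fun n ↦ ‖a n‖ ^ 2 * r ^ (2 * n)) (circleAverage (fun z ↦ ‖f z‖ ^ 2) 0 r) := by
  refine hasSum_sq_norm_mul_pow_circleAverage ?_ fun z hz ↦ hf z ?_
  · simpa using (hf r (by simpa using hr)).summable.norm
  · exact sphere_subset_closedBall.trans (closedBall_subset_ball hr) hz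

end HasDiscExpansion

section PolarCoordinates

lemma lintegral_eq_lintegral_circleMap {f : ℂ → ENNReal} (hf : Measurable f) :
    ∫⁻ z, f z =
      ∫⁻ r in Ioi (0 : ℝ), ENNReal.ofReal r * ∫⁻ θ in Ioo (-π) π, f (circleMap 0 r θ) := by
  have hpolar (p : ℝ × ℝ) : Complex.polarCoord.symm p = circleMap 0 p.1 p.2 := by
    rw [Complex.polarCoord_symm_apply, circleMap, Complex.exp_mul_I]
    simp
  have hmeas : Measurable fun p : ℝ × ℝ ↦ f (circleMap 0 p.1 p.2) :=
    hf.comp (by unfold circleMap; fun_prop)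
  rw [← Complex.lintegral_comp_polarCoord_symm, polarCoord_target, Measure.volume_eq_prod]
  simp only [hpolar, smul_eq_mul]
  rw [setLIntegral_prod _ (by exact (measurable_fst.ennreal_ofReal.mul hmeas).aemeasurable)]
  exact lintegral_congr fun r ↦ by
    dsimp only
    rw [lintegral_const_mul _ (by fun_prop)]

lemma ofReal_two_pi_mul_circleAverage {k : ℂ → ℝ} {r : ℝ}
    (hk : ContinuousOn k (sphere 0 |r|)) (hk₀ : ∀ z ∈ sphere (0 : ℂ) |r|, 0 ≤ k z) :
    ENNReal.ofReal (2 * π * circleAverage k 0 r) =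
      ∫⁻ θ in Ioo (-π) π, ENNReal.ofReal (k (circleMap 0 r θ)) := by
  have hcont : Continuous fun θ ↦ k (circleMap 0 r θ) :=
    hk.comp_continuous (by fun_prop) (circleMap_mem_sphere' 0 r)
  have hshift : ∫ θ in 0..2 * π, k (circleMap 0 r θ) = ∫ θ in -π..π, k (circleMap 0 r θ) := by
    have := ((periodic_circleMap 0 r).comp k).intervalIntegral_add_eq 0 (-π)
    simpa [show -π + 2 * π = π by ring] using this
  rw [circleAverage, smul_eq_mul, mul_inv_cancel_left₀ two_pi_pos.ne', hshift,
    intervalIntegral.integral_of_le (by linarith [pi_pos]), integral_Ioc_eq_integral_Ioo,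
    ofReal_integral_eq_lintegral_ofReal]
  · exact hcont.integrableOn_Icc.mono_set Ioo_subset_Icc_self
  · exact .of_forall fun θ ↦ hk₀ _ (circleMap_mem_sphere' 0 r θ)

lemma setLIntegral_ball_eq_lintegral_circleAverage {k : ℂ → ℝ} {R : ℝ}
    (hk : ContinuousOn k (ball 0 R)) (hk₀ : ∀ z ∈ ball (0 : ℂ) R, 0 ≤ k z) :
    ∫⁻ z in ball (0 : ℂ) R, ENNReal.ofReal (k z) =
      ∫⁻ r in Ioo 0 R, ENNReal.ofReal (2 * π * r * circleAverage k 0 r) := by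
  have hmeas : Measurable ((ball (0 : ℂ) R).indicator fun z ↦ ENNReal.ofReal (k z)) := by
    classical
    rw [← piecewise_eq_indicator]
    exact (ENNReal.continuous_ofReal.comp_continuousOn hk).measurable_piecewise
      continuousOn_const measurableSet_ball
  rw [← lintegral_indicator measurableSet_ball, lintegral_eq_lintegral_circleMap hmeas,
    ← Ioi_inter_Iio (b := R), inter_comm, ← setLIntegral_indicator measurableSet_Iio]
  refine setLIntegral_congr_fun measurableSet_Ioi fun r (hr : 0 < r) ↦ ?_
  by_cases hrR : r < R
  · have hsub : sphere (0 : ℂ) |r| ⊆ ball 0 R :=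
      sphere_subset_closedBall.trans (closedBall_subset_ball (by rwa [abs_of_pos hr]))
    simp only [indicator_of_mem (mem_Iio.2 hrR), mul_comm (2 * π) r, mul_assoc r,
      ENNReal.ofReal_mul hr.le,
      ofReal_two_pi_mul_circleAverage (hk.mono hsub) fun z hz ↦ hk₀ z (hsub hz),
      indicator_of_mem (hsub (circleMap_mem_sphere' 0 r _))]
  · simp [indicator, hrR, abs_of_pos hr]

end PolarCoordinates

namespace HasDiscExpansion

variable {f g : ℂ → ℂ} {a b : ℕ → ℂ}

lemma setLIntegral_sq_norm (hf : HasDiscExpansion f a) (hf' : ContinuousOn f (ball 0 1)) :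
    ∫⁻ z in ball (0 : ℂ) 1, ENNReal.ofReal (‖f z‖ ^ 2) =
      ∑' n, ENNReal.ofReal (π * (‖a n‖ ^ 2 / (n + 1))) := by
  rw [setLIntegral_ball_eq_lintegral_circleAverage (by fun_prop) fun _ _ ↦ sq_nonneg _]
  have hparseval : ∀ r ∈ Ioo (0 : ℝ) 1,
      ENNReal.ofReal (2 * π * r * circleAverage (fun z ↦ ‖f z‖ ^ 2) 0 r) =
        ∑' n, ENNReal.ofReal (2 * π * ‖a n‖ ^ 2 * r ^ (2 * n + 1)) := fun r hr ↦ by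
    have hsum := (hf.hasSum_circleAverage (abs_lt.2 ⟨by linarith [hr.1], hr.2⟩)).mul_left
      (2 * π * r)
    have hr₀ := hr.1
    rw [← hsum.tsum_eq, ENNReal.ofReal_tsum_of_nonneg (fun n ↦ by positivity) hsum.summable]
    exact tsum_congr fun n ↦ by ring_nf
  have hradial (n : ℕ) :
      ∫⁻ r in Ioo (0 : ℝ) 1, ENNReal.ofReal (2 * π * ‖a n‖ ^ 2 * r ^ (2 * n + 1)) =
      ENNReal.ofReal (π * (‖a n‖ ^ 2 / (n + 1))) := by
    have hcont : Continuous fun r : ℝ ↦ 2 * π * ‖a n‖ ^ 2 * r ^ (2 * n + 1) := by fun_prop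
    rw [← ofReal_integral_eq_lintegral_ofReal
        (hcont.integrableOn_Icc.mono_set Ioo_subset_Icc_self)
        ((ae_restrict_iff' measurableSet_Ioo).2 <| .of_forall fun r hr ↦ by
          have := hr.1; dsimp; positivity),
      ← integral_Ioc_eq_integral_Ioo, ← intervalIntegral.integral_of_le zero_le_one,
      intervalIntegral.integral_const_mul, integral_pow]
    congr 1
    push_cast
    field_simp
    ring
  rw [setLIntegral_congr_fun measurableSet_Ioo hparseval, lintegral_tsum fun n ↦ by fun_prop]
  exact tsum_congr hradial

lemma sum_sq_norm_le_of_circleAverage_le (hf : HasDiscExpansion f a) {M : ℝ}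
    (hM : ∀ r ∈ Ioo (0 : ℝ) 1, circleAverage (fun z ↦ ‖f z‖ ^ 2) 0 r ≤ M) (s : Finset ℕ) :
    ∑ n ∈ s, ‖a n‖ ^ 2 ≤ M := by
  have hlim : Tendsto (fun r : ℝ ↦ ∑ n ∈ s, ‖a n‖ ^ 2 * r ^ (2 * n)) (𝓝[<] 1)
      (𝓝 (∑ n ∈ s, ‖a n‖ ^ 2)) := by
    have hcont : Continuous fun r : ℝ ↦ ∑ n ∈ s, ‖a n‖ ^ 2 * r ^ (2 * n) := by fun_prop
    simpa using (hcont.tendsto 1).mono_left nhdsWithin_le_nhds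
  refine le_of_tendsto hlim ?_
  filter_upwards [Ioo_mem_nhdsLT zero_lt_one] with r hr
  have hr₀ := hr.1
  exact (sum_le_hasSum s (fun n _ ↦ by positivity)
    (hf.hasSum_circleAverage (abs_lt.2 ⟨by linarith, hr.2⟩))).trans (hM r hr)

lemma summable_sq_norm_of_circleAverage_le (hf : HasDiscExpansion f a) {M : ℝ}
    (hM : ∀ r ∈ Ioo (0 : ℝ) 1, circleAverage (fun z ↦ ‖f z‖ ^ 2) 0 r ≤ M) :
    Summable fun n ↦ ‖a n‖ ^ 2 :=
  summable_of_sum_le (fun _ ↦ sq_nonneg _) (hf.sum_sq_norm_le_of_circleAverage_le hM)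

lemma tsum_sq_norm_le_of_circleAverage_le (hf : HasDiscExpansion f a) {M : ℝ}
    (hM : ∀ r ∈ Ioo (0 : ℝ) 1, circleAverage (fun z ↦ ‖f z‖ ^ 2) 0 r ≤ M) :
    ∑' n, ‖a n‖ ^ 2 ≤ M :=
  (hf.summable_sq_norm_of_circleAverage_le hM).tsum_le_of_sum_le
    (hf.sum_sq_norm_le_of_circleAverage_le hM)

lemma circleAverage_sq_norm_mono (hf : HasDiscExpansion f a) {r s : ℝ} (hr : 0 ≤ r)
    (hrs : r ≤ s) (hs : s < 1) :
    circleAverage (fun z ↦ ‖f z‖ ^ 2) 0 r ≤ circleAverage (fun z ↦ ‖f z‖ ^ 2) 0 s := by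
  refine hasSum_le (fun n ↦ ?_)
    (hf.hasSum_circleAverage (abs_lt.2 ⟨by linarith, by linarith⟩))
    (hf.hasSum_circleAverage (abs_lt.2 ⟨by linarith, hs⟩))
  gcongr

end HasDiscExpansion

section Carleman

lemma hasSum_sum_mul_antidiagonal_of_nonneg {x y : ℕ → ℝ} (hx : Summable x) (hy : Summable y)
    (hx₀ : 0 ≤ x) (hy₀ : 0 ≤ y) :
    HasSum (fun n ↦ ∑ p ∈ antidiagonal n, x p.1 * y p.2) ((∑' n, x n) * ∑' n, y n) := by
  have hprod := hx.mul_of_nonneg hy hx₀ hy₀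
  rw [hx.tsum_mul_tsum_eq_tsum_sum_antidiagonal hy hprod]
  exact (summable_sum_mul_antidiagonal_of_summable_mul hprod).hasSum

lemma sq_norm_sum_antidiagonal_mul_le (a b : ℕ → ℂ) (n : ℕ) :
    ‖∑ p ∈ antidiagonal n, a p.1 * b p.2‖ ^ 2 / (n + 1) ≤
      ∑ p ∈ antidiagonal n, ‖a p.1‖ ^ 2 * ‖b p.2‖ ^ 2 := by
  rw [div_le_iff₀' (by positivity)]
  calc ‖∑ p ∈ antidiagonal n, a p.1 * b p.2‖ ^ 2
      ≤ (∑ p ∈ antidiagonal n, ‖a p.1 * b p.2‖) ^ 2 := by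
        gcongr
        exact norm_sum_le _ _
    _ ≤ (n + 1) * ∑ p ∈ antidiagonal n, ‖a p.1‖ ^ 2 * ‖b p.2‖ ^ 2 := by
        simpa [mul_pow] using
          sq_sum_le_card_mul_sum_sq (s := antidiagonal n) (f := fun p ↦ ‖a p.1 * b p.2‖)

theorem setLIntegral_sq_norm_mul_le_of_circleAverage_le {f g : ℂ → ℂ} {M N : ℝ}
    (hf : DifferentiableOn ℂ f (ball 0 1)) (hg : DifferentiableOn ℂ g (ball 0 1))
    (hM : ∀ r ∈ Ioo (0 : ℝ) 1, circleAverage (fun z ↦ ‖f z‖ ^ 2) 0 r ≤ M)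
    (hN : ∀ r ∈ Ioo (0 : ℝ) 1, circleAverage (fun z ↦ ‖g z‖ ^ 2) 0 r ≤ N) :
    ∫⁻ z in ball (0 : ℂ) 1, ENNReal.ofReal (‖(f * g) z‖ ^ 2) ≤ ENNReal.ofReal (π * (M * N)) := by
  obtain ⟨a, ha⟩ := exists_hasDiscExpansion hf
  obtain ⟨b, hb⟩ := exists_hasDiscExpansion hg
  have hsa := ha.summable_sq_norm_of_circleAverage_le hM
  have hsb := hb.summable_sq_norm_of_circleAverage_le hN
  have hconv := (hasSum_sum_mul_antidiagonal_of_nonneg hsa hsb (fun n ↦ sq_nonneg ‖a n‖)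
    fun n ↦ sq_nonneg ‖b n‖).mul_left π
  calc ∫⁻ z in ball (0 : ℂ) 1, ENNReal.ofReal (‖(f * g) z‖ ^ 2)
      = ∑' n, ENNReal.ofReal
          (π * (‖∑ p ∈ antidiagonal n, a p.1 * b p.2‖ ^ 2 / (n + 1))) :=
        (ha.mul hb).setLIntegral_sq_norm (hf.mul hg).continuousOn
    _ ≤ ∑' n, ENNReal.ofReal (π * ∑ p ∈ antidiagonal n, ‖a p.1‖ ^ 2 * ‖b p.2‖ ^ 2) := by
        refine ENNReal.tsum_le_tsum fun n ↦ ?_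
        gcongr
        exact sq_norm_sum_antidiagonal_mul_le a b n
    _ = ENNReal.ofReal (π * ((∑' n, ‖a n‖ ^ 2) * ∑' n, ‖b n‖ ^ 2)) := by
        rw [← hconv.tsum_eq,
          ENNReal.ofReal_tsum_of_nonneg (fun n ↦ by positivity) hconv.summable]
    _ ≤ ENNReal.ofReal (π * (M * N)) := by
        have hM' := ha.tsum_sq_norm_le_of_circleAverage_le hM
        have hN' := hb.tsum_sq_norm_le_of_circleAverage_le hN
        have hM₀ : 0 ≤ M := (tsum_nonneg fun n ↦ sq_nonneg ‖a n‖).trans hM'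
        gcongr

end Carleman

section Root

lemma exists_differentiableOn_pow_eq {U : Set ℂ} {g : ℂ → ℂ} {n : ℕ} (hU : IsSimplyConnected U)
    (hUo : IsOpen U) (hg : DifferentiableOn ℂ g U) (hg₀ : ∀ z ∈ U, g z ≠ 0) (hn : n ≠ 0) :
    ∃ f : ℂ → ℂ, DifferentiableOn ℂ f U ∧ ∀ z, f z ^ n = g z := by
  obtain ⟨f, hfc, hfg⟩ := Complex.exists_continuousOn_pow_eq hU hUo hg.continuousOn
    (by rintro ⟨z, hz, hgz⟩; exact hg₀ z hz hgz) hn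
  refine ⟨f, fun z hz ↦ DifferentiableAt.differentiableWithinAt ?_, hfg⟩
  have hfz : f z ≠ 0 := fun h ↦ hg₀ z hz (by rw [← hfg, h, zero_pow hn])
  have hgz := (hg.differentiableAt (hUo.mem_nhds hz)).hasDerivAt
  exact (HasDerivAt.of_comp_left (hfc.continuousAt (hUo.mem_nhds hz)) (hasDerivAt_pow n (f z)) hgz
    (mul_ne_zero (Nat.cast_ne_zero.2 hn) (pow_ne_zero _ hfz)) (.of_forall hfg)).differentiableAt

lemma isSimplyConnected_ball (c : ℂ) {r : ℝ} (hr : 0 < r) : IsSimplyConnected (ball c r) :=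
  have := (convex_ball c r).contractibleSpace (nonempty_ball.2 hr)
  SimplyConnectedSpace.ofContractible _

end Root

section WeightedCarleman

lemma circleAverage_sq_norm_le_of_eq_on_ball {f : ℂ → ℂ} {k : ℂ → ℝ}
    (hf : DifferentiableOn ℂ f (ball 0 1)) (hk : ContinuousOn k (closedBall 0 1))
    (hfk : ∀ z ∈ ball (0 : ℂ) 1, ‖f z‖ ^ 2 = k z) {r : ℝ} (hr : r ∈ Ioo (0 : ℝ) 1) :
    circleAverage (fun z ↦ ‖f z‖ ^ 2) 0 r ≤ circleAverage k 0 1 := by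
  obtain ⟨a, ha⟩ := exists_hasDiscExpansion hf
  have hcont : ContinuousOn (circleAverage k 0) (Icc 0 1) :=
    ContinuousOn.circleAverage (hk.mono fun z hz ↦ by simpa using hz.2) fun r hr ↦ hr.1
  have hlim : Tendsto (circleAverage k 0) (𝓝[<] 1) (𝓝 (circleAverage k 0 1)) :=
    (hcont 1 (right_mem_Icc.2 zero_le_one)).mono_of_mem_nhdsWithin (Icc_mem_nhdsLT zero_lt_one)
  refine ge_of_tendsto hlim ?_
  filter_upwards [Ioo_mem_nhdsLT hr.2] with s hs
  have hs₀ : 0 < s := hr.1.trans hs.1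
  rw [← circleAverage_congr_sphere (f₁ := fun z ↦ ‖f z‖ ^ 2) fun z hz ↦ hfk z ?_]
  · exact ha.circleAverage_sq_norm_mono hr.1.le hs.1.le hs.2
  · simpa [mem_sphere_zero_iff_norm.1 hz, abs_of_pos hs₀] using hs.2

lemma setIntegral_sq_norm_sq_mul_norm_le_of_ne_zero {v h : ℂ → ℂ}
    (hv : DiffContOnCl ℂ v (ball 0 1)) (hh : DiffContOnCl ℂ h (ball 0 1))
    (hh₀ : ∀ z ∈ ball (0 : ℂ) 1, h z ≠ 0) :
    ∫ z in ball (0 : ℂ) 1, (‖v z‖ ^ 2 * ‖h z‖) ^ 2 ≤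
      π * circleAverage (fun z ↦ ‖v z‖ ^ 2 * ‖h z‖) 0 1 ^ 2 := by
  obtain ⟨q, hq, hqh⟩ := exists_differentiableOn_pow_eq (isSimplyConnected_ball 0 one_pos)
    isOpen_ball hh.differentiableOn hh₀ two_ne_zero
  have hk : ContinuousOn (fun z ↦ ‖v z‖ ^ 2 * ‖h z‖) (closedBall 0 1) :=
    (hv.continuousOn_ball.norm.pow 2).mul hh.continuousOn_ball.norm
  have hvq : DifferentiableOn ℂ (v * q) (ball 0 1) := hv.differentiableOn.mul hq
  have hvqk (z : ℂ) : ‖(v * q) z‖ ^ 2 = ‖v z‖ ^ 2 * ‖h z‖ := by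
    rw [Pi.mul_apply, norm_mul, mul_pow, ← hqh z, norm_pow]
  have hhardy : ∀ r ∈ Ioo (0 : ℝ) 1, circleAverage (fun z ↦ ‖(v * q) z‖ ^ 2) 0 r ≤
      circleAverage (fun z ↦ ‖v z‖ ^ 2 * ‖h z‖) 0 1 := fun r hr ↦
    circleAverage_sq_norm_le_of_eq_on_ball hvq hk (fun z _ ↦ hvqk z) hr
  have hcarleman := setLIntegral_sq_norm_mul_le_of_circleAverage_le hvq hvq hhardy hhardy
  have hsq (z : ℂ) : ‖(v * q * (v * q)) z‖ ^ 2 = (‖v z‖ ^ 2 * ‖h z‖) ^ 2 := by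
    rw [Pi.mul_apply, norm_mul, ← sq, hvqk]
  simp only [hsq, ← sq (circleAverage _ 0 1)] at hcarleman
  rwa [← ofReal_integral_eq_lintegral_ofReal, ENNReal.ofReal_le_ofReal_iff (by positivity)]
    at hcarleman
  · exact ((hk.pow 2).integrableOn_compact (isCompact_closedBall 0 1)).mono_set
      ball_subset_closedBall
  · exact .of_forall fun z ↦ sq_nonneg _

end WeightedCarleman

section CauchySchwarz

lemma memLp_restrict_ball_of_continuousOn {X E : Type*} [PseudoMetricSpace X] [ProperSpace X]
    [MeasurableSpace X] [OpensMeasurableSpace X] [NormedAddCommGroup E]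
    [SecondCountableTopologyEither X E] {μ : Measure X} [IsFiniteMeasureOnCompacts μ]
    {k : X → E} {c : X} {r : ℝ} (hk : ContinuousOn k (closedBall c r)) (p : ENNReal) :
    MemLp k p (μ.restrict (ball c r)) := by
  obtain ⟨C, hC⟩ := (isCompact_closedBall c r).exists_bound_of_continuousOn hk
  have : IsFiniteMeasure (μ.restrict (ball c r)) :=
    isFiniteMeasure_restrict.2 measure_ball_lt_top.ne
  refine .of_bound ((hk.mono ball_subset_closedBall).aestronglyMeasurable measurableSet_ball) C ?_
  filter_upwards [ae_restrict_mem measurableSet_ball] with z hz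
  exact hC z (ball_subset_closedBall hz)

lemma integral_mul_le_sqrt_mul_sqrt {X : Type*} [MeasurableSpace X] {μ : Measure X} {k l : X → ℝ}
    (hk₀ : 0 ≤ k) (hl₀ : 0 ≤ l) (hk : MemLp k 2 μ) (hl : MemLp l 2 μ) :
    ∫ x, k x * l x ∂μ ≤ √(∫ x, k x ^ 2 ∂μ) * √(∫ x, l x ^ 2 ∂μ) := by
  have h := integral_mul_le_Lp_mul_Lq_of_nonneg HolderConjugate.two_two (.of_forall hk₀)
    (.of_forall hl₀) (by simpa using hk) (by simpa using hl)
  simpa only [rpow_two, ← sqrt_eq_rpow] using h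

end CauchySchwarz

section ZeroRemoval

open MeromorphicOn in
lemma exists_eq_prod_sub_pow_mul {𝕜 : Type*} [NontriviallyNormedField 𝕜]
    {w : 𝕜 → 𝕜} {K : Set 𝕜} (hK : IsCompact K) (hKc : IsPreconnected K) (hKn : K.Nontrivial)
    (hw : AnalyticOnNhd 𝕜 w K) (hw₀ : ∃ z ∈ K, w z ≠ 0) :
    ∃ (S : Finset 𝕜) (n : 𝕜 → ℕ) (g : 𝕜 → 𝕜), ↑S ⊆ K ∧ AnalyticOnNhd 𝕜 g K ∧
      (∀ z ∈ K, g z ≠ 0) ∧ ∀ z ∈ K, w z = (∏ u ∈ S, (z - u) ^ n u) * g z := by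
  obtain ⟨z₀, hz₀, hwz₀⟩ := hw₀
  have horder (u : K) : meromorphicOrderAt w u ≠ ⊤ :=
    hw.meromorphicOn.meromorphicOrderAt_ne_top_of_isPreconnected hKc hz₀ u.2 <| by
      simp [(hw z₀ hz₀).meromorphicNFAt.meromorphicOrderAt_eq_zero_iff.2 hwz₀]
  have hfin := (divisor w K).finiteSupport hK
  obtain ⟨g, hg, hg₀, hwg⟩ := hw.meromorphicOn.extract_zeros_poles horder hfin
  have hprod : ∏ᶠ u, (· - u) ^ divisor w K u =
      fun z ↦ ∏ u ∈ hfin.toFinset, (z - u) ^ (divisor w K u).toNat := by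
    rw [finprod_eq_prod_of_mulSupport_subset (s := hfin.toFinset) _
      (by simp [Function.FactorizedRational.mulSupport])]
    ext z
    rw [Finset.prod_apply]
    refine Finset.prod_congr rfl fun u _ ↦ ?_
    rw [Pi.pow_apply, ← zpow_natCast, Int.toNat_of_nonneg (hw.divisor_nonneg u)]
  rw [hprod] at hwg
  refine ⟨hfin.toFinset, fun u ↦ (divisor w K u).toNat, g, ?_, hg, fun z hz ↦ hg₀ ⟨z, hz⟩, ?_⟩
  · simpa using (divisor w K).supportWithinDomain
  · intro z hz
    have hwz := hw z hz
    have hPg : AnalyticAt 𝕜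
        ((fun z ↦ ∏ u ∈ hfin.toFinset, (z - u) ^ (divisor w K u).toNat) • g) z :=
      AnalyticAt.smul (by fun_prop) (hg z hz)
    have hne := hwz.meromorphicAt.eventuallyEq_nhdsNE_of_eventuallyEq_codiscreteWithin
      hPg.meromorphicAt hz (hKc.preperfect_of_nontrivial hKn z hz) hwg
    exact ((hwz.continuousAt.eventuallyEq_nhds_iff_eventuallyEq_nhdsNE
      hPg.continuousAt).1 hne).eq_of_nhds

lemma sq_norm_one_sub_conj_mul_sub_sq_norm_sub (u z : ℂ) :
    ‖1 - conj u * z‖ ^ 2 - ‖z - u‖ ^ 2 = (1 - ‖u‖ ^ 2) * (1 - ‖z‖ ^ 2) := by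
  simp only [Complex.sq_norm, Complex.normSq_apply, Complex.sub_re, Complex.sub_im, Complex.mul_re,
    Complex.mul_im, Complex.conj_re, Complex.conj_im, Complex.one_re, Complex.one_im]
  ring

lemma norm_sub_le_norm_one_sub_conj_mul {u z : ℂ} (hu : ‖u‖ ≤ 1) (hz : ‖z‖ ≤ 1) :
    ‖z - u‖ ≤ ‖1 - conj u * z‖ := by
  rw [← sq_le_sq₀ (norm_nonneg _) (norm_nonneg _), ← sub_nonneg,
    sq_norm_one_sub_conj_mul_sub_sq_norm_sub]
  exact mul_nonneg (sub_nonneg.2 (pow_le_one₀ (norm_nonneg _) hu))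
    (sub_nonneg.2 (pow_le_one₀ (norm_nonneg _) hz))

lemma norm_sub_eq_norm_one_sub_conj_mul (u : ℂ) {z : ℂ} (hz : ‖z‖ = 1) :
    ‖z - u‖ = ‖1 - conj u * z‖ := by
  rw [← sq_eq_sq₀ (norm_nonneg _) (norm_nonneg _), eq_comm, ← sub_eq_zero,
    sq_norm_one_sub_conj_mul_sub_sq_norm_sub, hz]
  ring

lemma one_sub_conj_mul_ne_zero {u z : ℂ} (hu : ‖u‖ ≤ 1) (hz : ‖z‖ < 1) :
    1 - conj u * z ≠ 0 := by
  intro h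
  have : ‖conj u * z‖ = 1 := by rw [← sub_eq_zero.1 h, norm_one]
  rw [norm_mul, RCLike.norm_conj] at this
  nlinarith [norm_nonneg u, norm_nonneg z]

theorem exists_analyticOnNhd_ne_zero_norm_le {w : ℂ → ℂ} (hw : AnalyticOnNhd ℂ w (closedBall 0 1))
    (hw₀ : ∃ z ∈ closedBall (0 : ℂ) 1, w z ≠ 0) :
    ∃ h : ℂ → ℂ, AnalyticOnNhd ℂ h (closedBall 0 1) ∧ (∀ z ∈ ball (0 : ℂ) 1, h z ≠ 0) ∧
      (∀ z ∈ closedBall (0 : ℂ) 1, ‖w z‖ ≤ ‖h z‖) ∧ ∀ z ∈ sphere (0 : ℂ) 1, ‖w z‖ = ‖h z‖ := by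
  obtain ⟨S, n, g, hS, hg, hg₀, hwg⟩ := exists_eq_prod_sub_pow_mul (isCompact_closedBall 0 1)
    (convex_closedBall (0 : ℂ) 1).isPreconnected ⟨0, by simp, 1, by simp, zero_ne_one⟩ hw hw₀
  have hS₁ {u : ℂ} (hu : u ∈ S) : ‖u‖ ≤ 1 := by simpa using hS hu
  refine ⟨fun z ↦ (∏ u ∈ S, (1 - conj u * z) ^ n u) * g z, ?_, ?_, ?_, ?_⟩
  · exact fun z hz ↦ AnalyticAt.mul (by fun_prop) (hg z hz)
  · intro z hz
    refine mul_ne_zero (Finset.prod_ne_zero_iff.2 fun u hu ↦ pow_ne_zero _ ?_)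
      (hg₀ z (ball_subset_closedBall hz))
    exact one_sub_conj_mul_ne_zero (hS₁ hu) (by simpa using hz)
  · intro z hz
    simp only [hwg z hz, norm_mul, norm_prod, norm_pow]
    gcongr with u hu
    exact norm_sub_le_norm_one_sub_conj_mul (hS₁ hu) (by simpa using hz)
  · intro z hz
    simp only [hwg z (sphere_subset_closedBall hz), norm_mul, norm_prod, norm_pow,
      norm_sub_eq_norm_one_sub_conj_mul _ (mem_sphere_zero_iff_norm.1 hz)]

end ZeroRemoval

theorem setIntegral_sq_norm_sq_mul_norm_le {v w : ℂ → ℂ} (hv : DiffContOnCl ℂ v (ball 0 1))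
    (hw : AnalyticOnNhd ℂ w (closedBall 0 1)) :
    ∫ z in ball (0 : ℂ) 1, (‖v z‖ ^ 2 * ‖w z‖) ^ 2 ≤
      π * circleAverage (fun z ↦ ‖v z‖ ^ 2 * ‖w z‖) 0 1 ^ 2 := by
  by_cases hw₀ : ∃ z ∈ closedBall (0 : ℂ) 1, w z ≠ 0
  · obtain ⟨h, hh, hh₀, hwh, hwh_sphere⟩ := exists_analyticOnNhd_ne_zero_norm_le hw hw₀
    have hint {g : ℂ → ℂ} (hg : AnalyticOnNhd ℂ g (closedBall 0 1)) :
        IntegrableOn (fun z ↦ (‖v z‖ ^ 2 * ‖g z‖) ^ 2) (ball 0 1) :=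
      (((hv.continuousOn_ball.norm.pow 2).mul hg.continuousOn.norm).pow 2).integrableOn_compact
        (isCompact_closedBall 0 1) |>.mono_set ball_subset_closedBall
    calc ∫ z in ball (0 : ℂ) 1, (‖v z‖ ^ 2 * ‖w z‖) ^ 2
        ≤ ∫ z in ball (0 : ℂ) 1, (‖v z‖ ^ 2 * ‖h z‖) ^ 2 := by
          refine setIntegral_mono_on (hint hw) (hint hh) measurableSet_ball fun z hz ↦ ?_
          gcongr
          exact hwh z (ball_subset_closedBall hz)
      _ ≤ π * circleAverage (fun z ↦ ‖v z‖ ^ 2 * ‖h z‖) 0 1 ^ 2 :=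
          setIntegral_sq_norm_sq_mul_norm_le_of_ne_zero hv
            (hh.differentiableOn.diffContOnCl_ball subset_rfl) hh₀
      _ = π * circleAverage (fun z ↦ ‖v z‖ ^ 2 * ‖w z‖) 0 1 ^ 2 := by
          rw [circleAverage_congr_sphere fun z hz ↦ ?_]
          simp only [hwh_sphere z (by simpa using hz)]
  · push Not at hw₀
    rw [setIntegral_eq_zero_of_forall_eq_zero fun z hz ↦ by
      simp [hw₀ z (ball_subset_closedBall hz)]]
    positivity

theorem stmt_3_general {v w : ℂ → ℂ} (hv : DiffContOnCl ℂ v (ball 0 1))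
    (hw : AnalyticOnNhd ℂ w (closedBall 0 1)) :
    ∫ z in ball (0 : ℂ) 1, ‖v z‖ ^ 2 * ‖w z‖ ^ 2 ≤
      1 / 2 * √((∫ z in ball (0 : ℂ) 1, ‖w z‖ ^ 2) / π) *
        ∫ φ in (0 : ℝ)..2 * π,
          ‖v (Complex.exp (φ * Complex.I))‖ ^ 2 * ‖w (Complex.exp (φ * Complex.I))‖ := by
  set A := ∫ z in ball (0 : ℂ) 1, ‖w z‖ ^ 2
  set B := circleAverage (fun z ↦ ‖v z‖ ^ 2 * ‖w z‖) 0 1 with hB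
  have hB₀ : 0 ≤ B := circleAverage_nonneg_of_nonneg fun z _ ↦ by positivity
  have hboundary : ∫ φ in (0 : ℝ)..2 * π,
      ‖v (Complex.exp (φ * Complex.I))‖ ^ 2 * ‖w (Complex.exp (φ * Complex.I))‖ = 2 * π * B := by
    simp [hB, circleAverage, circleMap, field]
  rw [hboundary]
  calc ∫ z in ball (0 : ℂ) 1, ‖v z‖ ^ 2 * ‖w z‖ ^ 2
      = ∫ z in ball (0 : ℂ) 1, ‖v z‖ ^ 2 * ‖w z‖ * ‖w z‖ := by simp only [sq ‖w _‖, mul_assoc]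
    _ ≤ √(∫ z in ball (0 : ℂ) 1, (‖v z‖ ^ 2 * ‖w z‖) ^ 2) * √A :=
        integral_mul_le_sqrt_mul_sqrt (fun z ↦ by positivity) (fun z ↦ norm_nonneg _)
          (memLp_restrict_ball_of_continuousOn
            ((hv.continuousOn_ball.norm.pow 2).mul hw.continuousOn.norm) 2)
          (memLp_restrict_ball_of_continuousOn hw.continuousOn.norm 2)
    _ ≤ √(π * B ^ 2) * √A := by gcongr; exact setIntegral_sq_norm_sq_mul_norm_le hv hw
    _ = 1 / 2 * √(A / π) * (2 * π * B) := by
        rw [sqrt_mul pi_nonneg, sqrt_sq hB₀, sqrt_div' _ pi_nonneg]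
        field_simp
        rw [sq_sqrt pi_nonneg, mul_assoc, mul_comm]

/-- Proposition 2.7 of the paper (the sharp embedding
`‖u‖²_{L²(Ω)} ≤ (1/2)√(|Ω|/π) ‖u‖²_{L²(∂Ω)}` for holomorphic `u`), stated via a conformal
parametrization `F` of `Ω` by the unit disk. -/
theorem stmt_3 (F : ℂ → ℂ) (U : Set ℂ) (hU : IsOpen U)
    (hUD : Metric.closedBall (0 : ℂ) 1 ⊆ U)
    (hF : DifferentiableOn ℂ F U)
    (hFinj : Set.InjOn F (Metric.closedBall (0 : ℂ) 1))
    (Ω : Set ℂ) (hΩ : Ω = F '' (Metric.ball (0 : ℂ) 1))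
    (u : ℂ → ℂ)
    (hu : DifferentiableOn ℂ u Ω)
    (hucont : ContinuousOn u (F '' (Metric.closedBall (0 : ℂ) 1))) :
    ∫ z in Metric.ball (0 : ℂ) 1, ‖u (F z)‖^2 * ‖deriv F z‖^2
      ≤ (1/2) * Real.sqrt ((∫ z in Metric.ball (0 : ℂ) 1, ‖deriv F z‖^2) / π) *
        ∫ φ in (0:ℝ)..(2*π),
          ‖u (F (Complex.exp (φ * Complex.I)))‖^2 * ‖deriv F (Complex.exp (φ * Complex.I))‖ := by
  subst hΩ
  have hw : AnalyticOnNhd ℂ (deriv F) (closedBall 0 1) :=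
    (hF.analyticOnNhd hU).deriv.mono hUD
  have hv : DiffContOnCl ℂ (u ∘ F) (ball 0 1) :=
    .mk_ball (hu.comp (hF.mono (ball_subset_closedBall.trans hUD)) (mapsTo_image F _))
      (hucont.comp (hF.continuousOn.mono hUD) (mapsTo_image F _))
  exact stmt_3_general hv hw
end

section
/- Let m ≥ 0 and Λ > 0, let μ : (0, ∞) → ℝ be continuous and strictly increasing with range exactly (0, Λ), and suppose a ↦ μ(a)/a is strictly decreasing on (0, ∞). Let ϑ(θ) = (1 − sin θ)/cos θ for θ ∈ (−π/2, π/2), let f : (0, ∞) → (−π/2, π/2) satisfy ϑ(f(a)) = a/(√(μ(a) + m²) + m) for all a > 0, and let λ : (−π/2, π/2) → ℝ satisfy λ(f(a)) = √(μ(a) + m²) for all a > 0. Then λ is continuous, strictly decreasing, and bijective from (−π/2, π/2) onto (m, √(Λ + m²)). -/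
open Real Set

/-!
Write `s(a) = √(μ(a) + m²)` and `g(a) = a / (s(a) + m)`, so that `ϑ ∘ f = g` and `λ ∘ f = s`. Since
`μ = (s - m)(s + m)`, we have `1 / g(a) = (μ(a) / a) / (s(a) - m)`, where the numerator decreases
and the denominator strictly increases: `g` is strictly increasing. It tends to `0` at `0`, because
`μ(a) ≥ μ(1) a` there, and to `∞` at `∞`, because `s` is bounded. As `ϑ(θ) = tan (π/4 - θ/2)` is
positive and strictly decreasing, `f` is a strictly decreasing bijection, so `λ = s ∘ f⁻¹` is
strictly decreasing with the same image as `s`; being monotone with open image, it is continuous.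
-/

section MonotoneMaps

theorem continuousOn_of_antitoneOn_of_isOpen_image {α β : Type*}
    [LinearOrder α] [TopologicalSpace α] [OrderTopology α]
    [LinearOrder β] [TopologicalSpace β] [OrderTopology β] [DenselyOrdered β]
    {h : α → β} {t : Set α} (hanti : AntitoneOn h t) (ht : IsOpen t) (himage : IsOpen (h '' t)) :
    ContinuousOn h t := fun _ hx =>
  (continuousAt_of_monotoneOn_of_image_mem_nhds (β := βᵒᵈ) hanti.dual_right (ht.mem_nhds hx)
    (himage.mem_nhds (mem_image_of_mem h hx))).continuousWithinAt

theorem strictAntiOn_of_comp_strictMonoOn {α β γ : Type*} [Preorder α] [LinearOrder β] [Preorder γ]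
    {f : α → β} {v : β → γ} {s : Set α} {t : Set β} (hv : StrictAntiOn v t) (hf : MapsTo f s t)
    (hvf : StrictMonoOn (v ∘ f) s) : StrictAntiOn f s := fun _ ha _ hb hab =>
  (hv.lt_iff_gt (hf ha) (hf hb)).1 (hvf ha hb hab)

theorem strictAntiOn_image_of_comp_strictMonoOn {α β γ : Type*}
    [LinearOrder α] [Preorder β] [Preorder γ]
    {f : α → β} {h : β → γ} {s : Set α} (hf : StrictAntiOn f s) (hhf : StrictMonoOn (h ∘ f) s) :
    StrictAntiOn h (f '' s) := by
  rintro _ ⟨a, ha, rfl⟩ _ ⟨b, hb, rfl⟩ hab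
  exact hhf hb ha ((hf.lt_iff_gt ha hb).1 hab)

theorem image_eq_of_injOn_of_subset_image_comp {α β γ : Type*} {f : α → β} {v : β → γ}
    {s : Set α} {t : Set β} (hv : InjOn v t) (hf : MapsTo f s t) (hsub : v '' t ⊆ (v ∘ f) '' s) :
    f '' s = t :=
  hf.image_subset.antisymm <|
    (hv.image_subset_image_iff Subset.rfl hf.image_subset).1 (hsub.trans_eq (image_comp v f s))

end MonotoneMaps

/-- The nonnegative Dirac eigenvalue `√(μ(a) + m²)` that corresponds, for mass `m`, to the
eigenvalue `μ(a)` of the `∂̄`-Robin Laplacian with parameter `a`. -/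
noncomputable def diracEigenvalue (μ : ℝ → ℝ) (m a : ℝ) : ℝ := √(μ a + m ^ 2)

/-- The value `a / (√(μ(a) + m²) + m)` of `ϑ` at the boundary angle for which `√(μ(a) + m²)` is a
Dirac eigenvalue. -/
noncomputable def boundaryParameter (μ : ℝ → ℝ) (m a : ℝ) : ℝ := a / (diracEigenvalue μ m a + m)

section Curves

open Filter Topology

variable {μ : ℝ → ℝ} {m a Λ : ℝ} {s : Set ℝ}

theorem abs_lt_diracEigenvalue (ha : 0 < μ a) : |m| < diracEigenvalue μ m a :=
  lt_sqrt_of_sq_lt (by rw [sq_abs]; linarith)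

theorem diracEigenvalue_add_pos (ha : 0 < μ a) : 0 < diracEigenvalue μ m a + m := by
  linarith [abs_lt_diracEigenvalue (m := m) ha, neg_abs_le m]

theorem diracEigenvalue_sub_pos (ha : 0 < μ a) : 0 < diracEigenvalue μ m a - m := by
  linarith [abs_lt_diracEigenvalue (m := m) ha, le_abs_self m]

theorem diracEigenvalue_sub_mul_add (ha : 0 ≤ μ a) :
    (diracEigenvalue μ m a - m) * (diracEigenvalue μ m a + m) = μ a := by
  have hsq : diracEigenvalue μ m a ^ 2 = μ a + m ^ 2 := sq_sqrt (by positivity)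
  linear_combination hsq

theorem strictMonoOn_diracEigenvalue (hμ : StrictMonoOn μ s) (hnonneg : ∀ a ∈ s, 0 ≤ μ a) :
    StrictMonoOn (diracEigenvalue μ m) s := fun a ha b hb hab =>
  sqrt_lt_sqrt (add_nonneg (hnonneg a ha) (sq_nonneg m)) (by linarith [hμ ha hb hab])

theorem continuousOn_diracEigenvalue (hμ : ContinuousOn μ s) :
    ContinuousOn (diracEigenvalue μ m) s :=
  (hμ.add continuousOn_const).sqrt

theorem image_sqrt_add_sq_Ioo (hm : 0 ≤ m) :
    (fun x => √(x + m ^ 2)) '' Ioo 0 Λ = Ioo m √(Λ + m ^ 2) := by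
  ext y
  constructor
  · rintro ⟨x, ⟨hx0, hxΛ⟩, rfl⟩
    exact ⟨lt_sqrt_of_sq_lt (by linarith), sqrt_lt_sqrt (by positivity) (by linarith)⟩
  · rintro ⟨hmy, hyΛ⟩
    have hy : 0 ≤ y := hm.trans hmy.le
    have hlower : m ^ 2 < y ^ 2 := by gcongr
    have hupper : y ^ 2 < Λ + m ^ 2 := (lt_sqrt hy).1 hyΛ
    refine ⟨y ^ 2 - m ^ 2, ⟨by linarith, by linarith⟩, ?_⟩
    simp only [sub_add_cancel, sqrt_sq hy]

theorem image_diracEigenvalue (hm : 0 ≤ m) (himage : μ '' s = Ioo 0 Λ) :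
    diracEigenvalue μ m '' s = Ioo m √(Λ + m ^ 2) := by
  rw [← image_sqrt_add_sq_Ioo hm, ← himage, image_image]
  rfl

theorem inv_boundaryParameter (ha : 0 < μ a) :
    (boundaryParameter μ m a)⁻¹ = μ a / a / (diracEigenvalue μ m a - m) := by
  rw [boundaryParameter, inv_div, eq_div_iff (diracEigenvalue_sub_pos ha).ne', div_mul_eq_mul_div,
    mul_comm, diracEigenvalue_sub_mul_add ha.le]

theorem boundaryParameter_pos (ha : 0 < a) (hμa : 0 < μ a) : 0 < boundaryParameter μ m a :=
  div_pos ha (diracEigenvalue_add_pos hμa)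

theorem strictMonoOn_boundaryParameter (hs : s ⊆ Ioi 0) (hμ : StrictMonoOn μ s)
    (hpos : ∀ a ∈ s, 0 < μ a) (hquot : AntitoneOn (fun a => μ a / a) s) :
    StrictMonoOn (boundaryParameter μ m) s := by
  intro a ha b hb hab
  have hlt : diracEigenvalue μ m a < diracEigenvalue μ m b :=
    strictMonoOn_diracEigenvalue hμ (fun a ha => (hpos a ha).le) ha hb hab
  refine (inv_lt_inv₀ (boundaryParameter_pos (hs hb) (hpos b hb))
    (boundaryParameter_pos (hs ha) (hpos a ha))).1 ?_
  rw [inv_boundaryParameter (hpos a ha), inv_boundaryParameter (hpos b hb)]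
  exact div_lt_div₀' (hquot ha hb hab.le) (sub_lt_sub_right hlt m)
    (div_pos (hpos a ha) (hs ha)) (diracEigenvalue_sub_pos (hpos a ha))

theorem continuousOn_boundaryParameter (hμ : ContinuousOn μ s) (hpos : ∀ a ∈ s, 0 < μ a) :
    ContinuousOn (boundaryParameter μ m) s :=
  continuousOn_id.div ((continuousOn_diracEigenvalue hμ).add continuousOn_const)
    fun a ha => (diracEigenvalue_add_pos (hpos a ha)).ne'

theorem boundaryParameter_le_sqrt_div (hm : 0 ≤ m) (ha : a ∈ Ioc 0 1) (hμ1 : 0 < μ 1)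
    (hquot : AntitoneOn (fun a => μ a / a) (Ioi 0)) :
    boundaryParameter μ m a ≤ √(a / μ 1) := by
  obtain ⟨ha0, ha1⟩ := ha
  have hlinear : μ 1 * a ≤ μ a := by
    have hquot_one : μ 1 / 1 ≤ μ a / a := hquot (mem_Ioi.2 ha0) (mem_Ioi.2 one_pos) ha1
    rwa [div_one, le_div_iff₀ ha0] at hquot_one
  have hden : √(μ 1 * a) ≤ diracEigenvalue μ m a + m :=
    (sqrt_le_sqrt (hlinear.trans (le_add_of_nonneg_right (sq_nonneg m)))).trans
      (le_add_of_nonneg_right hm)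
  calc boundaryParameter μ m a
      ≤ a / √(μ 1 * a) := div_le_div_of_nonneg_left ha0.le (by positivity) hden
    _ = √(a / μ 1) := by
      rw [sqrt_mul hμ1.le, sqrt_div ha0.le, mul_comm, ← div_div, div_sqrt]

theorem tendsto_boundaryParameter_nhdsGT_zero (hm : 0 ≤ m) (hpos : ∀ a ∈ Ioi 0, 0 < μ a)
    (hquot : AntitoneOn (fun a => μ a / a) (Ioi 0)) :
    Tendsto (boundaryParameter μ m) (𝓝[>] 0) (𝓝 0) := by
  have hbound : Tendsto (fun a => √(a / μ 1)) (𝓝[>] 0) (𝓝 0) := by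
    have hcont : Continuous fun a : ℝ => √(a / μ 1) := by fun_prop
    simpa using (hcont.tendsto 0).mono_left nhdsWithin_le_nhds
  refine tendsto_of_tendsto_of_tendsto_of_le_of_le' tendsto_const_nhds hbound ?_ ?_
  · filter_upwards [self_mem_nhdsWithin] with a ha
    exact (boundaryParameter_pos ha (hpos a ha)).le
  · filter_upwards [Ioc_mem_nhdsGT one_pos] with a ha
    exact boundaryParameter_le_sqrt_div hm ha (hpos 1 (mem_Ioi.2 one_pos)) hquot

theorem tendsto_boundaryParameter_atTop (hμ : ∀ᶠ a in atTop, μ a ∈ Ioc 0 Λ) :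
    Tendsto (boundaryParameter μ m) atTop atTop := by
  obtain ⟨b, hb0, hbΛ⟩ := hμ.exists
  have hle : ∀ {a}, μ a ≤ Λ → diracEigenvalue μ m a + m ≤ √(Λ + m ^ 2) + m := fun h => by
    unfold diracEigenvalue
    gcongr
  have hbound_pos : 0 < √(Λ + m ^ 2) + m := (diracEigenvalue_add_pos hb0).trans_le (hle hbΛ)
  refine tendsto_atTop_mono' atTop ?_ (tendsto_id.atTop_div_const hbound_pos)
  filter_upwards [hμ, eventually_ge_atTop 0] with a ⟨ha0, haΛ⟩ ha
  exact div_le_div_of_nonneg_left ha (diracEigenvalue_add_pos ha0) (hle haΛ)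

theorem Ioi_subset_image_boundaryParameter (hm : 0 ≤ m) (hμ : ContinuousOn μ (Ioi 0))
    (hmaps : MapsTo μ (Ioi 0) (Ioc 0 Λ)) (hquot : AntitoneOn (fun a => μ a / a) (Ioi 0)) :
    Ioi 0 ⊆ boundaryParameter μ m '' Ioi 0 := by
  have hpos : ∀ a ∈ Ioi 0, 0 < μ a := fun a ha => (hmaps ha).1
  exact isPreconnected_Ioi.intermediate_value_Ioi (l₁ := 𝓝[>] 0) (l₂ := atTop)
    inf_le_right (le_principal_iff.2 (Ioi_mem_atTop 0))
    (continuousOn_boundaryParameter hμ hpos) (tendsto_boundaryParameter_nhdsGT_zero hm hpos hquot)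
    (tendsto_boundaryParameter_atTop ((eventually_gt_atTop 0).mono fun _ ha => hmaps ha))

end Curves

/-- Abstract form of Proposition 3.5: the first Dirac eigenvalue curve `λ`, determined by
`λ(f(a)) = √(μ(a)+m²)` with `ϑ(f(a)) = a/(√(μ(a)+m²)+m)`, is continuous, strictly
decreasing, and bijective from `(−π/2, π/2)` onto `(m, √(Λ+m²))`. -/
theorem stmt_8 (m Λ : ℝ) (hm : 0 ≤ m) (hΛ : 0 < Λ)
    (μ : ℝ → ℝ)
    (hμcont : ContinuousOn μ (Ioi 0))
    (hμmono : StrictMonoOn μ (Ioi 0))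
    (hμrange : μ '' (Ioi 0) = Ioo 0 Λ)
    (hquot : StrictAntiOn (fun a => μ a / a) (Ioi 0))
    (f : ℝ → ℝ)
    (hfmaps : ∀ a ∈ Ioi (0:ℝ), f a ∈ Ioo (-(π/2)) (π/2))
    (hf : ∀ a ∈ Ioi (0:ℝ), vartheta (f a) = a / (Real.sqrt (μ a + m^2) + m))
    (lam : ℝ → ℝ)
    (hlam : ∀ a ∈ Ioi (0:ℝ), lam (f a) = Real.sqrt (μ a + m^2)) :
    ContinuousOn lam (Ioo (-(π/2)) (π/2)) ∧ StrictAntiOn lam (Ioo (-(π/2)) (π/2)) ∧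
      Set.BijOn lam (Ioo (-(π/2)) (π/2)) (Ioo m (Real.sqrt (Λ + m^2))) := by
  have hmaps : MapsTo μ (Ioi 0) (Ioo 0 Λ) := mapsTo_iff_image_subset.2 hμrange.subset
  have hpos : ∀ a ∈ Ioi 0, 0 < μ a := fun a ha => (hmaps ha).1
  have hϑf : EqOn (boundaryParameter μ m) (vartheta ∘ f) (Ioi 0) := fun a ha => (hf a ha).symm
  have hlamf : EqOn (diracEigenvalue μ m) (lam ∘ f) (Ioi 0) := fun a ha => (hlam a ha).symm
  have hf_image : f '' Ioi 0 = Ioo (-(π / 2)) (π / 2) := by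
    refine image_eq_of_injOn_of_subset_image_comp strictAntiOn_vartheta.injOn hfmaps ?_
    rw [← hϑf.image_eq]
    exact (image_subset_iff.2 fun _ hθ => vartheta_pos hθ).trans
      (Ioi_subset_image_boundaryParameter hm hμcont (hmaps.mono_right Ioo_subset_Ioc_self)
        hquot.antitoneOn)
  have hf_anti : StrictAntiOn f (Ioi 0) :=
    strictAntiOn_of_comp_strictMonoOn strictAntiOn_vartheta hfmaps
      ((strictMonoOn_boundaryParameter Subset.rfl hμmono hpos hquot.antitoneOn).congr hϑf)
  have hlam_anti : StrictAntiOn lam (Ioo (-(π / 2)) (π / 2)) := hf_image ▸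
    strictAntiOn_image_of_comp_strictMonoOn hf_anti
      ((strictMonoOn_diracEigenvalue hμmono fun a ha => (hpos a ha).le).congr hlamf)
  have hlam_image : lam '' Ioo (-(π / 2)) (π / 2) = Ioo m √(Λ + m ^ 2) := by
    rw [← hf_image, ← image_comp, ← hlamf.image_eq, image_diracEigenvalue hm hμrange]
  exact ⟨continuousOn_of_antitoneOn_of_isOpen_image hlam_anti.antitoneOn isOpen_Ioo
    (hlam_image ▸ isOpen_Ioo), hlam_anti, hlam_image ▸ hlam_anti.injOn.bijOn_image⟩
end

section
/- Let p > 0 and let f : ℂ → ℂ be complex-differentiable on the open unit disk 𝔻 = {z ∈ ℂ : |z| < 1}. Suppose the Hardy means M_p(r, f) := ((1/(2π)) ∫₀^{2π} |f(r e^{iφ})|^p dφ)^{1/p} are uniformly bounded for 0 < r < 1, and set M := sup_{0 < r < 1} M_p(r, f). Then (1/π) ∫_𝔻 |f(z)|^{2p} dA(z) ≤ M^{2p}, where dA denotes planar Lebesgue measure on 𝔻. -/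
open Real Set MeasureTheory

/-!
For a product of two power series on the disk of radius `R`, Cauchy–Schwarz on each coefficient of
the Cauchy product cancels the factor `1 / (n + 1)` that separates area integrals from circle
averages in Parseval's formula (Carleman). This gives the inequality for `|g| ^ 4` on the disk and
`|g| ^ 2` on the circle; taking `|g| = |f| ^ (p / 2)` settles every zero-free `f`. In general,
dividing `f` by the Blaschke product of its zeros in the disk increases `|f|` inside and preserves
it on the circle. Finally the radius tends to `1`.
-/

namespace HardyBergman

open Filter Metric Topology
open Finset.HasAntidiagonal (antidiagonal mem_antidiagonal)

section PowerSeries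

variable {a b : ℕ → ℂ} {R r : ℝ} {z : ℂ}

theorem norm_coeff_mul_pow_le (hz : z ∈ closedBall 0 R) (n : ℕ) :
    ‖a n * z ^ n‖ ≤ ‖a n‖ * R ^ n := by
  rw [norm_mul, norm_pow]
  gcongr
  exact mem_closedBall_zero_iff.1 hz

theorem summable_norm_coeff_mul_pow (ha : Summable fun n ↦ ‖a n‖ * R ^ n)
    (hz : z ∈ closedBall 0 R) : Summable fun n ↦ ‖a n * z ^ n‖ :=
  .of_nonneg_of_le (fun _ ↦ norm_nonneg _) (norm_coeff_mul_pow_le hz) ha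

theorem summable_norm_coeff_mul_pow_of_le (ha : Summable fun n ↦ ‖a n‖ * R ^ n) (hr : 0 ≤ r)
    (hrR : r ≤ R) : Summable fun n ↦ ‖a n‖ * r ^ n :=
  .of_nonneg_of_le (fun _ ↦ by positivity) (fun _ ↦ by gcongr) ha

theorem continuousOn_tsum_coeff_mul_pow (ha : Summable fun n ↦ ‖a n‖ * R ^ n) :
    ContinuousOn (fun z ↦ ∑' n, a n * z ^ n) (closedBall 0 R) :=
  continuousOn_tsum (fun n ↦ by fun_prop) ha fun n _ hz ↦ norm_coeff_mul_pow_le hz n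

theorem sum_range_sq_norm_coeff_eq_circleAverage (a : ℕ → ℂ) (R : ℝ) (N : ℕ) :
    ∑ n ∈ Finset.range N, ‖a n‖ ^ 2 * R ^ (2 * n) =
      circleAverage (fun z ↦ ‖∑ n ∈ Finset.range N, a n * z ^ n‖ ^ 2) 0 R := by
  let P : Polynomial ℂ :=
    ∑ n ∈ Finset.range N, Polynomial.monomial n (a n * R ^ n)
  have coeff_P (n : ℕ) : P.coeff n = if n < N then a n * R ^ n else 0 := by
    simp [P, Polynomial.coeff_monomial]
  have support_P : P.support ⊆ Finset.range N := fun n hn ↦ by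
    rw [Polynomial.mem_support_iff, coeff_P] at hn
    grind
  have eval_P (z : ℂ) : P.eval z = ∑ n ∈ Finset.range N, a n * (R * z) ^ n := by
    simp [P, Polynomial.eval_finsetSum, mul_pow, mul_assoc]
  calc ∑ n ∈ Finset.range N, ‖a n‖ ^ 2 * R ^ (2 * n)
    _ = ∑ n ∈ Finset.range N, ‖P.coeff n‖ ^ 2 := by
      refine Finset.sum_congr rfl fun n hn ↦ ?_
      rw [coeff_P, if_pos (Finset.mem_range.1 hn), norm_mul, mul_pow, ← Complex.ofReal_pow,
        Complex.norm_real, norm_eq_abs, sq_abs, pow_mul']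
    _ = ∑ n ∈ P.support, ‖P.coeff n‖ ^ 2 :=
      (Finset.sum_subset support_P fun n _ hn ↦ by
        simp [Polynomial.notMem_support_iff.1 hn]).symm
    _ = circleAverage (fun z ↦ ‖P.eval z‖ ^ 2) 0 1 := P.sum_sq_norm_coeff_eq_circleAverage
    _ = _ := by rw [circleAverage_eq_circleAverage_zero_one (R := R)]; simp only [eval_P, add_zero]

theorem hasSum_sq_norm_coeff_circleAverage (hR : 0 ≤ R) (ha : Summable fun n ↦ ‖a n‖ * R ^ n) :
    HasSum (fun n ↦ ‖a n‖ ^ 2 * R ^ (2 * n))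
      (circleAverage (fun z ↦ ‖∑' n, a n * z ^ n‖ ^ 2) 0 R) := by
  rw [hasSum_iff_tendsto_nat_of_nonneg fun n ↦ by positivity]
  simp only [sum_range_sq_norm_coeff_eq_circleAverage, circleAverage_def]
  have norm_sum_le {z : ℂ} (hz : z ∈ closedBall 0 R) (N : ℕ) :
      ‖∑ n ∈ Finset.range N, a n * z ^ n‖ ≤ ∑' n, ‖a n‖ * R ^ n :=
    (norm_sum_le_of_le _ fun n _ ↦ norm_coeff_mul_pow_le hz n).trans
      (ha.sum_le_tsum _ fun n _ ↦ by positivity)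
  refine .const_smul (intervalIntegral.tendsto_integral_filter_of_dominated_convergence
    (fun _ ↦ (∑' n, ‖a n‖ * R ^ n) ^ 2) (.of_forall fun N ↦ ?_) (.of_forall fun N ↦ ?_)
    intervalIntegrable_const ?_) _
  · exact (by fun_prop : Continuous _).aestronglyMeasurable
  · refine .of_forall fun θ _ ↦ ?_
    rw [norm_pow, norm_norm]
    gcongr
    exact norm_sum_le (circleMap_mem_closedBall 0 hR θ) N
  · exact .of_forall fun θ _ ↦ ((summable_norm_coeff_mul_pow ha
      (circleMap_mem_closedBall 0 hR θ)).of_norm.hasSum.tendsto_sum_nat.norm.pow 2)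

/-- The coefficients of the product of the power series with coefficients `a` and `b`. -/
def cauchyProduct (a b : ℕ → ℂ) (n : ℕ) : ℂ :=
  ∑ kl ∈ antidiagonal n, a kl.1 * b kl.2

theorem cauchyProduct_mul_pow (a b : ℕ → ℂ) (z : ℂ) (n : ℕ) :
    cauchyProduct a b n * z ^ n =
      ∑ kl ∈ antidiagonal n, (a kl.1 * z ^ kl.1) * (b kl.2 * z ^ kl.2) := by
  rw [cauchyProduct, Finset.sum_mul]
  refine Finset.sum_congr rfl fun kl hkl ↦ ?_
  rw [← mem_antidiagonal.1 hkl, pow_add]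
  ring

theorem summable_norm_cauchyProduct_mul_pow (hR : 0 ≤ R) (ha : Summable fun n ↦ ‖a n‖ * R ^ n)
    (hb : Summable fun n ↦ ‖b n‖ * R ^ n) : Summable fun n ↦ ‖cauchyProduct a b n‖ * R ^ n := by
  have hR_mem : (R : ℂ) ∈ closedBall 0 R := by simp [abs_of_nonneg hR]
  have := summable_norm_sum_mul_antidiagonal_of_summable_norm
    (summable_norm_coeff_mul_pow ha hR_mem) (summable_norm_coeff_mul_pow hb hR_mem)
  simpa only [← cauchyProduct_mul_pow, norm_mul, norm_pow, Complex.norm_real,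
    norm_of_nonneg hR] using this

theorem tsum_cauchyProduct_mul_pow (ha : Summable fun n ↦ ‖a n‖ * R ^ n)
    (hb : Summable fun n ↦ ‖b n‖ * R ^ n) (hz : z ∈ closedBall 0 R) :
    ∑' n, cauchyProduct a b n * z ^ n = (∑' n, a n * z ^ n) * ∑' n, b n * z ^ n := by
  simp only [cauchyProduct_mul_pow]
  exact (tsum_mul_tsum_eq_tsum_sum_antidiagonal_of_summable_norm
    (summable_norm_coeff_mul_pow ha hz) (summable_norm_coeff_mul_pow hb hz)).symm

theorem sq_norm_cauchyProduct_le (a b : ℕ → ℂ) (n : ℕ) :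
    ‖cauchyProduct a b n‖ ^ 2 ≤
      (n + 1) * ∑ kl ∈ antidiagonal n, ‖a kl.1‖ ^ 2 * ‖b kl.2‖ ^ 2 := by
  calc ‖cauchyProduct a b n‖ ^ 2
    _ ≤ (∑ kl ∈ antidiagonal n, ‖a kl.1‖ * ‖b kl.2‖) ^ 2 := by
      gcongr
      exact norm_sum_le_of_le _ fun kl _ ↦ (norm_mul _ _).le
    _ ≤ _ := sq_sum_le_card_mul_sum_sq
    _ = _ := by simp [mul_pow]

end PowerSeries

section Polar

variable {E : Type*} [NormedAddCommGroup E] [NormedSpace ℝ E] {F : ℂ → E} {R : ℝ}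

theorem polarCoord_symm_eq_circleMap (p : ℝ × ℝ) :
    Complex.polarCoord.symm p = circleMap 0 p.1 p.2 := by
  simp [circleMap, Complex.exp_mul_I]

theorem setIntegral_Ioo_neg_pi_pi_circleMap (F : ℂ → E) (s : ℝ) :
    ∫ θ in Ioo (-π) π, F (circleMap 0 s θ) = (2 * π) • circleAverage F 0 s := by
  have periodic : Function.Periodic (fun θ ↦ F (circleMap 0 s θ)) (2 * π) := fun θ ↦ by
    simp only [periodic_circleMap 0 s θ]
  rw [circleAverage_def, smul_inv_smul₀ two_pi_pos.ne', ← integral_Ioc_eq_integral_Ioo,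
    ← intervalIntegral.integral_of_le (by linarith [pi_pos])]
  simpa [two_mul] using periodic.intervalIntegral_add_eq (-π) 0

theorem setIntegral_ball_eq_setIntegral_polar (F : ℂ → E) (R : ℝ) :
    ∫ z in ball 0 R, F z = ∫ p in Ioo 0 R ×ˢ Ioo (-π) π, p.1 • F (circleMap 0 p.1 p.2) := by
  have inter_preimage_ball : polarCoord.target ∩ {p : ℝ × ℝ | circleMap 0 p.1 p.2 ∈ ball 0 R} =
      Ioo 0 R ×ˢ Ioo (-π) π := by
    ext ⟨s, θ⟩
    simp only [polarCoord_target, mem_inter_iff, mem_prod, mem_ofPred_eq, mem_ball_zero_iff,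
      norm_circleMap_zero, mem_Ioi, mem_Ioo]
    grind
  have measurableSet_preimage : MeasurableSet {p : ℝ × ℝ | circleMap 0 p.1 p.2 ∈ ball 0 R} :=
    (isOpen_ball.preimage (by fun_prop)).measurableSet
  rw [← inter_preimage_ball, ← setIntegral_indicator measurableSet_preimage,
    ← integral_indicator measurableSet_ball, ← Complex.integral_comp_polarCoord_symm]
  simp only [polarCoord_symm_eq_circleMap]
  simp only [indicator, mem_ofPred_eq, smul_ite, smul_zero]

theorem setIntegral_ball_eq_intervalIntegral_circleAverage (hR : 0 ≤ R)
    (hF : ContinuousOn F (closedBall 0 R)) :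
    ∫ z in ball 0 R, F z = ∫ s in (0)..R, (2 * π * s) • circleAverage F 0 s := by
  have continuousOn_polar : ContinuousOn (fun p : ℝ × ℝ ↦ p.1 • F (circleMap 0 p.1 p.2))
      (Icc 0 R ×ˢ Icc (-π) π) := by
    refine continuousOn_fst.smul (hF.comp (by fun_prop) ?_)
    rintro ⟨s, θ⟩ ⟨⟨hs0, hsR⟩, -⟩
    simpa [abs_of_nonneg hs0] using hsR
  have integrableOn_polar : IntegrableOn _ _ (volume.prod volume) :=
    (continuousOn_polar.integrableOn_compact (isCompact_Icc.prod isCompact_Icc)).mono_set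
      (prod_mono Ioo_subset_Icc_self Ioo_subset_Icc_self)
  rw [setIntegral_ball_eq_setIntegral_polar, Measure.volume_eq_prod,
    setIntegral_prod _ integrableOn_polar, intervalIntegral.integral_of_le hR,
    integral_Ioc_eq_integral_Ioo]
  simp only [integral_smul, setIntegral_Ioo_neg_pi_pi_circleMap, smul_smul, mul_comm]

end Polar

section Carleman

variable {a b : ℕ → ℂ} {g h : ℂ → ℂ} {R r : ℝ}

theorem hasSum_setIntegral_ball_sq_norm (hR : 0 ≤ R) (ha : Summable fun n ↦ ‖a n‖ * R ^ n) :
    HasSum (fun n ↦ π * R ^ 2 * (‖a n‖ ^ 2 * R ^ (2 * n) / (n + 1)))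
      (∫ z in ball 0 R, ‖∑' n, a n * z ^ n‖ ^ 2) := by
  have integral_term (n : ℕ) : ∫ s in (0)..R, 2 * π * s * (‖a n‖ ^ 2 * s ^ (2 * n)) =
      π * R ^ 2 * (‖a n‖ ^ 2 * R ^ (2 * n) / (n + 1)) := by
    calc ∫ s in (0)..R, 2 * π * s * (‖a n‖ ^ 2 * s ^ (2 * n))
      _ = ∫ s in (0)..R, 2 * π * ‖a n‖ ^ 2 * s ^ (2 * n + 1) := by
        congr! 2 with s
        ring
      _ = _ := by
        rw [intervalIntegral.integral_const_mul, integral_pow]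
        push_cast
        field_simp
        ring
  have polar := setIntegral_ball_eq_intervalIntegral_circleAverage hR
    (F := fun z ↦ ‖∑' n, a n * z ^ n‖ ^ 2) ((continuousOn_tsum_coeff_mul_pow ha).norm.pow 2)
  simp only [polar, ← integral_term, smul_eq_mul]
  refine intervalIntegral.hasSum_integral_of_dominated_convergence
    (fun n _ ↦ 2 * π * R * (‖a n‖ ^ 2 * R ^ (2 * n)))
    (fun n ↦ (by fun_prop : Continuous _).aestronglyMeasurable)
    (fun n ↦ .of_forall fun s hs ↦ ?_) (.of_forall fun s _ ↦ ?_) intervalIntegrable_const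
    (.of_forall fun s hs ↦ ?_)
  · obtain ⟨hs0, hsR⟩ := uIoc_of_le hR ▸ hs
    rw [norm_of_nonneg (by positivity)]
    gcongr
  · exact (hasSum_sq_norm_coeff_circleAverage hR ha).summable.mul_left _
  · obtain ⟨hs0, hsR⟩ := uIoc_of_le hR ▸ hs
    exact (hasSum_sq_norm_coeff_circleAverage hs0.le
      (summable_norm_coeff_mul_pow_of_le ha hs0.le hsR)).mul_left _

theorem sq_norm_cauchyProduct_mul_pow_div_le (a b : ℕ → ℂ) (hR : 0 ≤ R) (n : ℕ) :
    ‖cauchyProduct a b n‖ ^ 2 * R ^ (2 * n) / (n + 1) ≤ ∑ kl ∈ antidiagonal n,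
      ‖a kl.1‖ ^ 2 * R ^ (2 * kl.1) * (‖b kl.2‖ ^ 2 * R ^ (2 * kl.2)) := by
  rw [div_le_iff₀ (by positivity)]
  calc ‖cauchyProduct a b n‖ ^ 2 * R ^ (2 * n)
    _ ≤ (n + 1) * (∑ kl ∈ antidiagonal n, ‖a kl.1‖ ^ 2 * ‖b kl.2‖ ^ 2) * R ^ (2 * n) := by
      gcongr
      exact sq_norm_cauchyProduct_le a b n
    _ = _ := by
      rw [mul_assoc, mul_comm, Finset.sum_mul]
      congr 1
      refine Finset.sum_congr rfl fun kl hkl ↦ ?_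
      rw [← mem_antidiagonal.1 hkl, mul_add, pow_add]
      ring

theorem setIntegral_ball_sq_norm_tsum_mul_tsum_le (hR : 0 ≤ R)
    (ha : Summable fun n ↦ ‖a n‖ * R ^ n) (hb : Summable fun n ↦ ‖b n‖ * R ^ n) :
    ∫ z in ball 0 R, ‖(∑' n, a n * z ^ n) * ∑' n, b n * z ^ n‖ ^ 2 ≤
      π * R ^ 2 * (circleAverage (fun z ↦ ‖∑' n, a n * z ^ n‖ ^ 2) 0 R *
        circleAverage (fun z ↦ ‖∑' n, b n * z ^ n‖ ^ 2) 0 R) := by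
  have parseval_a := hasSum_sq_norm_coeff_circleAverage hR ha
  have parseval_b := hasSum_sq_norm_coeff_circleAverage hR hb
  have area := hasSum_setIntegral_ball_sq_norm hR (summable_norm_cauchyProduct_mul_pow hR ha hb)
  have integral_eq : ∫ z in ball 0 R, ‖∑' n, cauchyProduct a b n * z ^ n‖ ^ 2 =
      ∫ z in ball 0 R, ‖(∑' n, a n * z ^ n) * ∑' n, b n * z ^ n‖ ^ 2 :=
    setIntegral_congr_fun measurableSet_ball fun z hz ↦ by
      simp only [tsum_cauchyProduct_mul_pow ha hb (ball_subset_closedBall hz)]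
  have product : HasSum (fun n ↦ ∑ kl ∈ antidiagonal n,
      ‖a kl.1‖ ^ 2 * R ^ (2 * kl.1) * (‖b kl.2‖ ^ 2 * R ^ (2 * kl.2)))
      (circleAverage (fun z ↦ ‖∑' n, a n * z ^ n‖ ^ 2) 0 R *
        circleAverage (fun z ↦ ‖∑' n, b n * z ^ n‖ ^ 2) 0 R) := by
    have norm_a := parseval_a.summable.norm
    have norm_b := parseval_b.summable.norm
    rw [← parseval_a.tsum_eq, ← parseval_b.tsum_eq,
      tsum_mul_tsum_eq_tsum_sum_antidiagonal_of_summable_norm norm_a norm_b]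
    exact (summable_norm_sum_mul_antidiagonal_of_summable_norm norm_a norm_b).of_norm.hasSum
  refine hasSum_le (fun n ↦ ?_) (integral_eq ▸ area) (product.mul_left _)
  gcongr
  exact sq_norm_cauchyProduct_mul_pow_div_le a b hR n

theorem exists_summable_eqOn_tsum (hg : DifferentiableOn ℂ g (ball 0 R)) (hr : 0 ≤ r)
    (hrR : r < R) : ∃ a : ℕ → ℂ, Summable (fun n ↦ ‖a n‖ * r ^ n) ∧
      EqOn g (fun z ↦ ∑' n, a n * z ^ n) (closedBall 0 r) := by
  have taylor {z : ℂ} (hz : z ∈ ball 0 R) :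
      HasSum (fun n : ℕ ↦ (n.factorial : ℂ)⁻¹ * iteratedDeriv n g 0 * z ^ n) (g z) := by
    simpa [mul_assoc, mul_comm (z ^ _)] using Complex.hasSum_taylorSeries_on_ball hg hz
  refine ⟨fun n ↦ (n.factorial : ℂ)⁻¹ * iteratedDeriv n g 0, ?_, fun z hz ↦
    (taylor (closedBall_subset_ball hrR hz)).tsum_eq.symm⟩
  have hr_mem : (r : ℂ) ∈ ball 0 R := by simpa [abs_of_nonneg hr] using hrR
  simpa [abs_of_nonneg hr] using (taylor hr_mem).summable.norm

theorem setIntegral_ball_sq_norm_mul_le (hg : DifferentiableOn ℂ g (ball 0 R))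
    (hh : DifferentiableOn ℂ h (ball 0 R)) (hr : 0 ≤ r) (hrR : r < R) :
    ∫ z in ball 0 r, ‖g z * h z‖ ^ 2 ≤ π * r ^ 2 *
      (circleAverage (fun z ↦ ‖g z‖ ^ 2) 0 r * circleAverage (fun z ↦ ‖h z‖ ^ 2) 0 r) := by
  obtain ⟨a, ha, hga⟩ := exists_summable_eqOn_tsum hg hr hrR
  obtain ⟨b, hb, hhb⟩ := exists_summable_eqOn_tsum hh hr hrR
  have sphere_subset : sphere (0 : ℂ) |r| ⊆ closedBall 0 r := by
    simpa only [abs_of_nonneg hr] using sphere_subset_closedBall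
  have integral_eq : ∫ z in ball 0 r, ‖g z * h z‖ ^ 2 =
      ∫ z in ball 0 r, ‖(∑' n, a n * z ^ n) * ∑' n, b n * z ^ n‖ ^ 2 :=
    setIntegral_congr_fun measurableSet_ball fun z hz ↦ by
      simp only [hga (ball_subset_closedBall hz), hhb (ball_subset_closedBall hz)]
  have average_congr {u v : ℂ → ℂ} (huv : EqOn u v (closedBall 0 r)) :
      circleAverage (fun z ↦ ‖u z‖ ^ 2) 0 r = circleAverage (fun z ↦ ‖v z‖ ^ 2) 0 r :=
    circleAverage_congr_sphere fun z hz ↦ by simp only [huv (sphere_subset hz)]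
  rw [integral_eq, average_congr hga, average_congr hhb]
  exact setIntegral_ball_sq_norm_tsum_mul_tsum_le hr ha hb

theorem exists_differentiableOn_norm_eq_rpow {c : ℂ} (hg : DifferentiableOn ℂ g (ball c R))
    (hg0 : ∀ z ∈ ball c R, g z ≠ 0) (q : ℝ) :
    ∃ h : ℂ → ℂ, DifferentiableOn ℂ h (ball c R) ∧ ∀ z ∈ ball c R, ‖h z‖ = ‖g z‖ ^ q := by
  obtain ⟨L, hL, hL_re⟩ := InnerProductSpace.HarmonicOnNhd.exists_analyticOnNhd_ball_re_eq
    fun z hz ↦ (hg.analyticAt (isOpen_ball.mem_nhds hz)).harmonicAt_log_norm (hg0 z hz)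
  refine ⟨fun z ↦ Complex.exp (q * L z), (hL.differentiableOn.const_mul _).cexp, fun z hz ↦ ?_⟩
  have re_L : (L z).re = Real.log ‖g z‖ := hL_re hz
  rw [Complex.norm_exp, Complex.re_ofReal_mul, re_L, mul_comm,
    ← rpow_def_of_pos (norm_pos_iff.2 (hg0 z hz))]

theorem setIntegral_ball_norm_rpow_le_of_forall_ne_zero (hg : DifferentiableOn ℂ g (ball 0 R))
    (hg0 : ∀ z ∈ ball 0 R, g z ≠ 0) (p : ℝ) (hr : 0 ≤ r) (hrR : r < R) :
    ∫ z in ball 0 r, ‖g z‖ ^ (2 * p) ≤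
      π * r ^ 2 * circleAverage (fun z ↦ ‖g z‖ ^ p) 0 r ^ 2 := by
  obtain ⟨h, hh, h_norm⟩ := exists_differentiableOn_norm_eq_rpow hg hg0 (p / 2)
  have sq_norm_h {z : ℂ} (hz : z ∈ ball 0 R) : ‖h z‖ ^ 2 = ‖g z‖ ^ p := by
    rw [h_norm z hz, ← rpow_mul_natCast (norm_nonneg _)]
    simp
  have sphere_subset : sphere (0 : ℂ) |r| ⊆ ball 0 R := by
    simpa only [abs_of_nonneg hr] using sphere_subset_ball hrR
  calc ∫ z in ball 0 r, ‖g z‖ ^ (2 * p)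
    _ = ∫ z in ball 0 r, ‖h z * h z‖ ^ 2 := by
      refine setIntegral_congr_fun measurableSet_ball fun z hz ↦ ?_
      simp only [norm_mul, mul_pow, sq_norm_h (ball_subset_ball hrR.le hz)]
      rw [two_mul, rpow_add (norm_pos_iff.2 (hg0 z (ball_subset_ball hrR.le hz)))]
    _ ≤ _ := setIntegral_ball_sq_norm_mul_le hh hh hr hrR
    _ = _ := by
      rw [circleAverage_congr_sphere fun z hz ↦ sq_norm_h (sphere_subset hz),
        sq (circleAverage _ _ _)]

end Carleman

section Exhaustion

variable {X : Type*} [PseudoMetricSpace X] [MeasurableSpace X] [OpensMeasurableSpace X]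
  {μ : Measure X} {F : X → ℝ} {B : ℝ → ℝ} {c : X} {R C : ℝ}

theorem aecover_ball {ι : Type*} {l : Filter ι} {r : ι → ℝ} (hr : Tendsto r l (𝓝 R)) :
    AECover (μ.restrict (ball c R)) l fun i ↦ ball c (r i) where
  ae_eventually_mem := ae_restrict_of_forall_mem measurableSet_ball fun _ hx ↦
    hr.eventually_const_lt (mem_ball.1 hx)
  measurableSet _ := measurableSet_ball

theorem setIntegral_ball_le_of_tendsto (hF : ∀ x ∈ ball c R, 0 ≤ F x)
    (hint : ∀ r < R, IntegrableOn F (ball c r) μ)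
    (hle : ∀ᶠ r in 𝓝[<] R, ∫ x in ball c r, F x ∂μ ≤ B r) (hB : Tendsto B (𝓝[<] R) (𝓝 C)) :
    ∫ x in ball c R, F x ∂μ ≤ C := by
  obtain ⟨r, -, hrR, hr⟩ := exists_seq_strictMono_tendsto R
  have hr' : Tendsto r atTop (𝓝[<] R) := tendsto_nhdsWithin_iff.2 ⟨hr, .of_forall hrR⟩
  have cover : AECover (μ.restrict (ball c R)) atTop fun n ↦ ball c (r n) := aecover_ball hr
  have restrict_eq (n : ℕ) :
      (μ.restrict (ball c R)).restrict (ball c (r n)) = μ.restrict (ball c (r n)) :=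
    Measure.restrict_restrict_of_subset (ball_subset_ball (hrR n).le)
  have integral_le : ∀ᶠ n in atTop,
      ∫ x in ball c (r n), F x ∂μ.restrict (ball c R) ≤ B (r n) := by
    simpa only [restrict_eq] using hr'.eventually hle
  have integrable : IntegrableOn F (ball c R) μ :=
    cover.integrable_of_integral_bounded_of_nonneg_ae (C + 1)
      (fun n ↦ by simpa only [IntegrableOn, restrict_eq] using hint _ (hrR n))
      (ae_restrict_of_forall_mem measurableSet_ball hF)
      (integral_le.mp <| ((hB.comp hr').eventually_le_const (lt_add_one C)).mono
        fun _ hB hle ↦ hle.trans hB)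
  exact le_of_tendsto_of_tendsto (cover.integral_tendsto_of_countably_generated integrable)
    (hB.comp hr') integral_le

end Exhaustion

section Blaschke

variable {f : ℂ → ℂ} {R : ℝ} {w z : ℂ} {D : ℂ → ℤ}

theorem norm_inv_canonicalFactor_le_one (hw : w ∈ ball 0 R) (hz : z ∈ closedBall 0 R) :
    ‖(Complex.canonicalFactor R w z)⁻¹‖ ≤ 1 := by
  rw [Complex.canonicalFactor_apply, inv_div, norm_div]
  refine div_le_one_of_le₀ (le_of_sq_le_sq ?_ (norm_nonneg _)) (norm_nonneg _)
  have sq_norm_sub_sq_norm : ‖R ^ 2 - (starRingEnd ℂ) w * z‖ ^ 2 - ‖R * (z - w)‖ ^ 2 =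
      (R ^ 2 - ‖w‖ ^ 2) * (R ^ 2 - ‖z‖ ^ 2) := by
    simp only [Complex.sq_norm, Complex.normSq_apply]
    simp only [pow_two, Complex.sub_re, Complex.mul_re, Complex.ofReal_re, Complex.ofReal_im,
      Complex.conj_re, Complex.conj_im, Complex.sub_im, Complex.mul_im]
    ring
  have hw' : ‖w‖ ^ 2 ≤ R ^ 2 := by gcongr; exact (mem_ball_zero_iff.1 hw).le
  have hz' : ‖z‖ ^ 2 ≤ R ^ 2 := by gcongr; exact mem_closedBall_zero_iff.1 hz
  linarith [mul_nonneg (sub_nonneg.2 hw') (sub_nonneg.2 hz')]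

/-- The finite Blaschke product on `ball 0 R` with zeros `w` of multiplicity `D w`. Mathlib's
canonical factors have poles rather than zeros at the points `w`, whence the negative exponents. -/
noncomputable def blaschkeProduct (R : ℝ) (D : ℂ → ℤ) : ℂ → ℂ :=
  ∏ᶠ w, Complex.canonicalFactor R w ^ (-D w)

theorem norm_blaschkeProduct_le_one (hD : 0 ≤ D) (hDR : D.support ⊆ ball 0 R)
    (hz : z ∈ closedBall 0 R) : ‖blaschkeProduct R D z‖ ≤ 1 := by
  refine finprod_induction (fun B : ℂ → ℂ ↦ ‖B z‖ ≤ 1) (by simp)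
    (fun B C hB hC ↦ (norm_mul_le _ _).trans (mul_le_one₀ hB (norm_nonneg _) hC)) fun w ↦ ?_
  by_cases hw : D w = 0
  · simp [hw]
  obtain ⟨n, hn⟩ := Int.eq_ofNat_of_zero_le (hD w)
  rw [Pi.pow_apply, hn, ← inv_zpow', zpow_natCast, norm_pow]
  exact pow_le_one₀ (norm_nonneg _) (norm_inv_canonicalFactor_le_one (hDR hw) hz)

theorem norm_blaschkeProduct_eq_one (hDR : D.support ⊆ ball 0 R) (hz : z ∈ sphere 0 R) :
    ‖blaschkeProduct R D z‖ = 1 := by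
  refine finprod_induction (fun B : ℂ → ℂ ↦ ‖B z‖ = 1) (by simp)
    (fun B C hB hC ↦ by simp [hB, hC]) fun w ↦ ?_
  by_cases hw : D w = 0
  · simp [hw]
  · simp [Complex.norm_canonicalFactor_eval_circle_eq_one (hDR hw) hz]

theorem eqOn_zero_or_meromorphicOrderAt_ne_top {U : Set ℂ} (hf : AnalyticOnNhd ℂ f U)
    (hU : IsPreconnected U) : EqOn f 0 U ∨ ∀ u : U, meromorphicOrderAt f u ≠ ⊤ := by
  by_contra! ⟨hf0, ⟨u, hu⟩, hu_top⟩
  exact hf0 (hf.eqOn_zero_of_preconnected_of_frequently_eq_zero hU hu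
    (meromorphicOrderAt_eq_top_iff.1 hu_top).frequently)

theorem exists_analyticOnNhd_ne_zero_norm_le (hR : 0 < R)
    (hf : AnalyticOnNhd ℂ f (closedBall 0 R)) (hf0 : ¬ EqOn f 0 (closedBall 0 R)) :
    ∃ g : ℂ → ℂ, AnalyticOnNhd ℂ g (closedBall 0 R) ∧ (∀ z ∈ ball 0 R, g z ≠ 0) ∧
      (∀ᶠ z in codiscreteWithin (closedBall 0 R), ‖f z‖ ≤ ‖g z‖) ∧
      ∀ᶠ z in codiscreteWithin (sphere 0 R), ‖f z‖ = ‖g z‖ := by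
  have order_ne_top := (eqOn_zero_or_meromorphicOrderAt_ne_top hf
    (convex_closedBall 0 R).isPreconnected).resolve_left hf0
  obtain ⟨g, decomp⟩ := hf.meromorphicOn.exists_canonicalDecomp order_ne_top
  let D := MeromorphicOn.divisor f (ball 0 R)
  have D_nonneg : 0 ≤ ⇑D :=
    MeromorphicOn.AnalyticOnNhd.divisor_nonneg (hf.mono ball_subset_closedBall)
  have f_eq : f =ᶠ[codiscreteWithin (closedBall 0 R)] blaschkeProduct R D • g :=
    decomp.eventuallyEq
  have divisor_g_nonneg : 0 ≤ MeromorphicOn.divisor g (closedBall 0 R) := fun z ↦ by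
    rw [decomp.divisor_eq_divisor hR]
    exact MeromorphicOn.AnalyticOnNhd.divisor_nonneg (hf.mono sphere_subset_closedBall) z
  refine ⟨g, decomp.meromorphicNFOn.divisor_nonneg_iff_analyticOnNhd.1 divisor_g_nonneg,
    decomp.ne_zero, ?_, ?_⟩
  · filter_upwards [f_eq, self_mem_codiscreteWithin _] with z hfz hz
    rw [hfz, Pi.smul_apply', smul_eq_mul, norm_mul]
    exact mul_le_of_le_one_left (norm_nonneg _)
      (norm_blaschkeProduct_le_one D_nonneg D.supportWithinDomain hz)
  · filter_upwards [codiscreteWithin_mono sphere_subset_closedBall f_eq,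
      self_mem_codiscreteWithin _] with z hfz hz
    rw [hfz, Pi.smul_apply', smul_eq_mul, norm_mul,
      norm_blaschkeProduct_eq_one D.supportWithinDomain hz, one_mul]

end Blaschke

section HardyMean

variable {f g : ℂ → ℂ} {p R r M : ℝ}

theorem integrableOn_norm_rpow_ball (hg : ContinuousOn g (closedBall 0 R)) (hp : 0 ≤ p) :
    IntegrableOn (fun z ↦ ‖g z‖ ^ p) (ball 0 R) :=
  ((hg.norm.rpow_const fun _ _ ↦ .inr hp).integrableOn_compact
    (isCompact_closedBall 0 R)).mono_set ball_subset_closedBall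

theorem tendsto_circleAverage_norm_rpow (hR : 0 < R) (hg : ContinuousOn g (closedBall 0 R))
    (hp : 0 ≤ p) : Tendsto (circleAverage (fun z ↦ ‖g z‖ ^ p) 0) (𝓝[<] R)
      (𝓝 (circleAverage (fun z ↦ ‖g z‖ ^ p) 0 R)) := by
  have continuousOn_average : ContinuousOn (circleAverage (fun z ↦ ‖g z‖ ^ p) 0) (Icc 0 R) :=
    ContinuousOn.circleAverage ((hg.norm.rpow_const fun _ _ ↦ .inr hp).mono fun z hz ↦ by
      simpa using hz.2) fun r hr ↦ hr.1
  rw [← nhdsWithin_Ico_eq_nhdsLT hR]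
  exact (continuousOn_average R (right_mem_Icc.2 hR.le)).mono Ico_subset_Icc_self

theorem setIntegral_ball_norm_rpow_le_of_diffContOnCl_of_forall_ne_zero (hR : 0 < R)
    (hg : DiffContOnCl ℂ g (ball 0 R)) (hg0 : ∀ z ∈ ball 0 R, g z ≠ 0) (hp : 0 ≤ p) :
    ∫ z in ball 0 R, ‖g z‖ ^ (2 * p) ≤
      π * R ^ 2 * circleAverage (fun z ↦ ‖g z‖ ^ p) 0 R ^ 2 := by
  have hg_cont : ContinuousOn g (closedBall 0 R) := hg.continuousOn_ball
  have tendsto_radius : Tendsto (fun r : ℝ ↦ π * r ^ 2) (𝓝[<] R) (𝓝 (π * R ^ 2)) :=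
    (by fun_prop : Continuous _).continuousWithinAt
  refine setIntegral_ball_le_of_tendsto (fun _ _ ↦ by positivity)
    (fun r hr ↦ (integrableOn_norm_rpow_ball hg_cont (by positivity)).mono_set
      (ball_subset_ball hr.le)) ?_
    (tendsto_radius.mul ((tendsto_circleAverage_norm_rpow hR hg_cont hp).pow 2))
  filter_upwards [Ioo_mem_nhdsLT hR] with r hr
  exact setIntegral_ball_norm_rpow_le_of_forall_ne_zero hg.differentiableOn hg0 p hr.1.le hr.2

theorem setIntegral_ball_norm_rpow_le_of_analyticOnNhd (hR : 0 < R)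
    (hf : AnalyticOnNhd ℂ f (closedBall 0 R)) (hp : 0 < p) :
    ∫ z in ball 0 R, ‖f z‖ ^ (2 * p) ≤
      π * R ^ 2 * circleAverage (fun z ↦ ‖f z‖ ^ p) 0 R ^ 2 := by
  by_cases hf0 : EqOn f 0 (closedBall 0 R)
  · rw [setIntegral_eq_zero_of_forall_eq_zero fun z hz ↦ by
      simp [hf0 (ball_subset_closedBall hz), hp.ne']]
    positivity
  obtain ⟨g, hg, hg0, norm_le, norm_eq⟩ := exists_analyticOnNhd_ne_zero_norm_le hR hf hf0
  calc ∫ z in ball 0 R, ‖f z‖ ^ (2 * p)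
    _ ≤ ∫ z in ball 0 R, ‖g z‖ ^ (2 * p) := by
      refine integral_mono_of_nonneg (.of_forall fun _ ↦ by positivity)
        (integrableOn_norm_rpow_ball hg.continuousOn (by positivity)) ?_
      filter_upwards [ae_restrict_le_codiscreteWithin measurableSet_ball
        (codiscreteWithin_mono ball_subset_closedBall norm_le)] with z hz
      gcongr
    _ ≤ π * R ^ 2 * circleAverage (fun z ↦ ‖g z‖ ^ p) 0 R ^ 2 :=
      setIntegral_ball_norm_rpow_le_of_diffContOnCl_of_forall_ne_zero hR
        (hg.differentiableOn.diffContOnCl_ball subset_rfl) hg0 hp.le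
    _ = π * R ^ 2 * circleAverage (fun z ↦ ‖f z‖ ^ p) 0 R ^ 2 := by
      congr 2
      refine circleAverage_congr_codiscreteWithin ?_ hR.ne'
      rw [abs_of_pos hR]
      filter_upwards [norm_eq] with z hz
      rw [hz]

/-- The Hardy mean `M_p(r, f)`, the normalised `L^p` norm of `f` on the circle of radius `r`. -/
noncomputable def hardyMean (p : ℝ) (f : ℂ → ℂ) (r : ℝ) : ℝ :=
  circleAverage (fun z ↦ ‖f z‖ ^ p) 0 r ^ (1 / p)

theorem hardyMean_eq_intervalIntegral (p : ℝ) (f : ℂ → ℂ) (r : ℝ) :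
    hardyMean p f r = (1 / (2 * π) * ∫ φ in (0)..(2 * π),
      ‖f (r * Complex.exp (φ * Complex.I))‖ ^ p) ^ (1 / p) := by
  simp only [hardyMean, circleAverage_def, circleMap_zero, smul_eq_mul, one_div]

theorem circleAverage_norm_rpow_nonneg (p : ℝ) (f : ℂ → ℂ) (r : ℝ) :
    0 ≤ circleAverage (fun z ↦ ‖f z‖ ^ p) 0 r :=
  circleAverage_nonneg_of_nonneg fun _ _ ↦ by positivity

theorem hardyMean_nonneg (p : ℝ) (f : ℂ → ℂ) (r : ℝ) : 0 ≤ hardyMean p f r :=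
  rpow_nonneg (circleAverage_norm_rpow_nonneg p f r) _

theorem sq_circleAverage_norm_rpow (hp : p ≠ 0) (f : ℂ → ℂ) (r : ℝ) :
    circleAverage (fun z ↦ ‖f z‖ ^ p) 0 r ^ 2 = hardyMean p f r ^ (2 * p) := by
  rw [hardyMean, ← rpow_mul (circleAverage_norm_rpow_nonneg p f r), ← rpow_natCast]
  congr 1
  field_simp
  norm_num

theorem setIntegral_ball_norm_rpow_le_of_hardyMean_le (hf : DifferentiableOn ℂ f (ball 0 1))
    (hp : 0 < p) (hM : ∀ r ∈ Ioo (0 : ℝ) 1, hardyMean p f r ≤ M) :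
    ∫ z in ball 0 1, ‖f z‖ ^ (2 * p) ≤ π * M ^ (2 * p) := by
  have hf_closedBall {r : ℝ} (hr : r < 1) : AnalyticOnNhd ℂ f (closedBall 0 r) :=
    (hf.analyticOnNhd isOpen_ball).mono (closedBall_subset_ball hr)
  refine setIntegral_ball_le_of_tendsto (fun _ _ ↦ by positivity)
    (fun r hr ↦ integrableOn_norm_rpow_ball (hf_closedBall hr).continuousOn (by positivity)) ?_
    tendsto_const_nhds
  filter_upwards [Ioo_mem_nhdsLT one_pos] with r hr
  calc ∫ z in ball 0 r, ‖f z‖ ^ (2 * p)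
    _ ≤ π * r ^ 2 * circleAverage (fun z ↦ ‖f z‖ ^ p) 0 r ^ 2 :=
      setIntegral_ball_norm_rpow_le_of_analyticOnNhd hr.1 (hf_closedBall hr.2) hp
    _ = π * r ^ 2 * hardyMean p f r ^ (2 * p) := by rw [sq_circleAverage_norm_rpow hp.ne']
    _ ≤ π * 1 * M ^ (2 * p) := by
      have := hardyMean_nonneg p f r
      gcongr
      · exact pow_le_one₀ hr.1.le hr.2.le
      · exact hM r hr
    _ = π * M ^ (2 * p) := by rw [mul_one]

end HardyMean

end HardyBergman

/-- Inequality part of the sharp Hardy–Littlewood embedding `H^p(𝔻) ↪ A^{2p}(𝔻)`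
(Theorem 5.1 of the paper): `‖f‖_{A^{2p}}^{2p} ≤ ‖f‖_{H^p}^{2p}`. -/
theorem stmt_11 (p : ℝ) (hp : 0 < p) (f : ℂ → ℂ)
    (hf : DifferentiableOn ℂ f (Metric.ball (0 : ℂ) 1))
    (hbdd : BddAbove (Set.range fun r : Set.Ioo (0:ℝ) 1 =>
      ((1 / (2 * π)) * ∫ φ in (0:ℝ)..(2*π),
        ‖f (((r : ℝ) : ℂ) * Complex.exp (φ * Complex.I))‖ ^ p) ^ (1/p)))
    (M : ℝ)
    (hM : M = ⨆ r : Set.Ioo (0:ℝ) 1,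
      ((1 / (2 * π)) * ∫ φ in (0:ℝ)..(2*π),
        ‖f (((r : ℝ) : ℂ) * Complex.exp (φ * Complex.I))‖ ^ p) ^ (1/p)) :
    (1 / π) * ∫ z in Metric.ball (0 : ℂ) 1, ‖f z‖ ^ (2*p) ≤ M ^ (2*p) := by
  simp only [← HardyBergman.hardyMean_eq_intervalIntegral] at hbdd hM
  have hardyMean_le (r : ℝ) (hr : r ∈ Ioo (0 : ℝ) 1) : HardyBergman.hardyMean p f r ≤ M :=
    hM ▸ le_ciSup hbdd ⟨r, hr⟩
  rw [one_div, inv_mul_le_iff₀ pi_pos]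
  exact HardyBergman.setIntegral_ball_norm_rpow_le_of_hardyMean_le hf hp hardyMean_le
end
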